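/- arXiv:1105.2363 — 6 statements merged into one kernel-verified Lean document; each statement's English description precedes it below -/
import Mathlib

section
/- Let (k_1, l_1, ι_1) and (k_2, l_2, ι_2) be admissible triplets. Then the stratum Σ^{k_1,l_1}_{ι_1} is contained in the stratum Σ^{k_2,l_2}_{ι_2} if and only if k_2 ≥ k_1 and ι_1 can be split into two disjoint subsets ι_1 = ῑ_1 ∪ ι̿_1 such that ῑ_1 ⊆ ι_2 and card(ι̿_1) ≤ k_2 − k_1 (equivalently: k_2 ≥ k_1 and card(ι_1 \ ι_2) ≤ k_2 − k_1). -/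
open MeasureTheory Metric
open scoped NNReal ENNReal BigOperators

variable {X : Type*}

/-- The stratum `Σ^{k,l}_ι`: all probability measures of the form
`s_1 δ_{p_{i_1}} + … + s_l δ_{p_{i_l}} + t_1 δ_{q_1} + … + t_k δ_{q_k}`. -/
def Stratum [MeasurableSpace X] {m : ℕ} (p : Fin m → X) (k : ℕ) (ι : Finset (Fin m)) :
    Set (Measure X) :=
  {μ | ∃ (s : Fin m → ℝ≥0) (t : Fin k → ℝ≥0) (q : Fin k → X),
    ((∑ i ∈ ι, s i) + ∑ j, t j = 1) ∧
    μ = (∑ i ∈ ι, ((s i : ℝ≥0∞) • Measure.dirac (p i)))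
        + ∑ j, ((t j : ℝ≥0∞) • Measure.dirac (q j))}

/-- Admissibility of a triplet `(k, l, ι)` (with `l = ι.card`):
`4π (k + Σ_{j ∈ ι} (1 + α_j)) < ρ`. -/
def Admissible {m : ℕ} (α : Fin m → ℝ) (ρ : ℝ) (k : ℕ) (ι : Finset (Fin m)) : Prop :=
  4 * Real.pi * ((k : ℝ) + ∑ j ∈ ι, (1 + α j)) < ρ

/-- `Σ^{k₁,l₁}_{ι₁} ⊆ Σ^{k₂,l₂}_{ι₂}` iff `k₁ ≤ k₂` and
`card (ι₁ \ ι₂) ≤ k₂ - k₁`. -/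
theorem stratum_subset_iff
    [MetricSpace X] [CompactSpace X] [Infinite X] [MeasurableSpace X] [BorelSpace X]
    {m : ℕ} (hm : 1 ≤ m) (p : Fin m → X) (hp : Function.Injective p)
    (α : Fin m → ℝ) (hα : ∀ j, -1 < α j ∧ α j < 0) (hmono : Monotone α)
    (ρ : ℝ) (hρ : 0 < ρ)
    (k₁ k₂ : ℕ) (ι₁ ι₂ : Finset (Fin m))
    (h₁ : Admissible α ρ k₁ ι₁) (h₂ : Admissible α ρ k₂ ι₂) :
    Stratum p k₁ ι₁ ⊆ Stratum p k₂ ι₂ ↔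
      k₁ ≤ k₂ ∧ (ι₁ \ ι₂).card ≤ k₂ - k₁ := by
  classical
  have key : (k₁ ≤ k₂ ∧ (ι₁ \ ι₂).card ≤ k₂ - k₁) ↔ (ι₁ \ ι₂).card + k₁ ≤ k₂ := by omega
  rw [key]
  have hcard : Fintype.card ({i // i ∈ ι₁ \ ι₂} ⊕ Fin k₁) = (ι₁ \ ι₂).card + k₁ := by
    rw [Fintype.card_sum, Fintype.card_coe, Fintype.card_fin]
  constructor
  · intro hsub
    by_cases hn : ι₁.card + k₁ = 0
    · have := Finset.card_le_card (Finset.sdiff_subset : ι₁ \ ι₂ ⊆ ι₁)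
      omega
    have hinf : (Set.range p)ᶜ.Infinite := (Set.finite_range p).infinite_compl
    let g := hinf.natEmbedding
    let c : ℝ≥0 := ((ι₁.card + k₁ : ℕ) : ℝ≥0)⁻¹
    have hc : c ≠ 0 := inv_ne_zero (Nat.cast_ne_zero.mpr hn)
    have hc' : (c : ℝ≥0∞) ≠ 0 := by exact_mod_cast hc
    let μ : Measure X := (∑ i ∈ ι₁, ((c : ℝ≥0∞) • Measure.dirac (p i)))
        + ∑ j : Fin k₁, ((c : ℝ≥0∞) • Measure.dirac (g j : X))
    have hμ : μ ∈ Stratum p k₁ ι₁ := by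
      refine ⟨fun _ => c, fun _ => c, fun j => g j, ?_, rfl⟩
      simp only [Finset.sum_const, Finset.card_univ, Fintype.card_fin, ← add_smul]
      rw [nsmul_eq_mul]
      exact mul_inv_cancel₀ (Nat.cast_ne_zero.mpr hn)
    obtain ⟨s, t, q, -, hq⟩ := hsub hμ
    have hzero : ∀ x, (∀ i ∈ ι₂, p i ≠ x) → (∀ j, q j ≠ x) → μ {x} = 0 := by
      intro x h1 h2
      rw [hq, Measure.add_apply, Measure.finsetSum_apply, Measure.finsetSum_apply,
        Finset.sum_eq_zero, Finset.sum_eq_zero, add_zero]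
      · intro j _
        simp [h2 j]
      · intro i hi
        simp [h1 i hi]
    have hposp : ∀ i ∈ ι₁, μ {p i} ≠ 0 := by
      intro i hi h0
      simp only [μ, Measure.add_apply, Measure.finsetSum_apply, add_eq_zero,
        Finset.sum_eq_zero_iff] at h0
      have := h0.1 i hi
      simp [hc] at this
    have hposq : ∀ j : Fin k₁, μ {(g j : X)} ≠ 0 := by
      intro j h0
      simp only [μ, Measure.add_apply, Measure.finsetSum_apply, add_eq_zero,
        Finset.sum_eq_zero_iff] at h0
      have := h0.2 j (Finset.mem_univ _)
      simp [hc] at this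
    have hg : ∀ (n : ℕ) i, p i ≠ g n := fun n i h => (g n).2 ⟨i, h⟩
    have hex : ∀ a : {i // i ∈ ι₁ \ ι₂} ⊕ Fin k₁,
        ∃ j, q j = Sum.elim (fun i : {i // i ∈ ι₁ \ ι₂} => p i.1) (fun j : Fin k₁ => (g j : X)) a := by
      intro a
      by_contra! hcon
      rcases a with ⟨i, hi⟩ | j
      · rw [Finset.mem_sdiff] at hi
        exact hposp i hi.1 (hzero _ (fun i' hi' h => hi.2 (hp h ▸ hi')) hcon)
      · exact hposq j (hzero _ (fun i _ => hg _ _) hcon)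
    choose f hf using hex
    have hinj : Function.Injective f := by
      intro a b hab
      have h : Sum.elim (fun i : {i // i ∈ ι₁ \ ι₂} => p i.1) (fun j : Fin k₁ => (g j : X)) a
          = Sum.elim (fun i : {i // i ∈ ι₁ \ ι₂} => p i.1) (fun j : Fin k₁ => (g j : X)) b := by
        rw [← hf, ← hf, hab]
      rcases a with a | a <;> rcases b with b | b <;> simp only [Sum.elim_inl, Sum.elim_inr] at h
      · rw [Subtype.ext (hp h)]
      · exact absurd h (hg _ _)
      · exact absurd h.symm (hg _ _)
      · rw [Fin.ext (g.injective (Subtype.ext h))]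
    have := Fintype.card_le_of_injective f hinj
    rwa [hcard, Fintype.card_fin] at this
  · rintro hle μ ⟨s, t, q, hst, rfl⟩
    obtain ⟨e⟩ : Nonempty (({i // i ∈ ι₁ \ ι₂} ⊕ Fin k₁) ↪ Fin k₂) :=
      Function.Embedding.nonempty_of_card_le (by rw [hcard, Fintype.card_fin]; exact hle)
    let T : Fin k₂ → ℝ≥0 := Function.extend e (Sum.elim (fun i => s i.1) t) 0
    let Q : Fin k₂ → X := Function.extend e (Sum.elim (fun i => p i.1) q) (fun _ => p ⟨0, hm⟩)
    have hT : ∀ a, T (e a) = Sum.elim (fun i => s i.1) t a := e.injective.extend_apply _ _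
    have hQ : ∀ a, Q (e a) = Sum.elim (fun i => p i.1) q a := e.injective.extend_apply _ _
    have hT0 : ∀ j, j ∉ Set.range e → T j = 0 := fun j hj => Function.extend_apply' _ _ _ hj
    have gen : ∀ {M : Type _} [AddCommMonoid M] (F : ℝ≥0 → X → M), (∀ x, F 0 x = 0) →
        (∑ i ∈ ι₁, F (s i) (p i)) + ∑ j, F (t j) (q j) =
        (∑ i ∈ ι₂, F (if i ∈ ι₁ then s i else 0) (p i)) + ∑ j, F (T j) (Q j) := by
      intro M _ F hF
      have h1 : ∑ j, F (T j) (Q j) =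
          ∑ i ∈ ι₁ \ ι₂, F (s i) (p i) + ∑ j, F (t j) (q j) := by
        rw [← Fintype.sum_of_injective e e.injective
          (fun a => F (T (e a)) (Q (e a))) (fun j => F (T j) (Q j))
          (fun j hj => by simp only [hT0 j hj, hF]) (fun _ => rfl)]
        simp only [hT, hQ, Fintype.sum_sum_type, Sum.elim_inl, Sum.elim_inr]
        rw [Finset.sum_coe_sort (ι₁ \ ι₂) (fun i => F (s i) (p i))]
      have h2 : ∑ i ∈ ι₂, F (if i ∈ ι₁ then s i else 0) (p i) = ∑ i ∈ ι₁ ∩ ι₂, F (s i) (p i) := by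
        rw [Finset.inter_comm, ← Finset.filter_mem_eq_inter, Finset.sum_filter]
        refine Finset.sum_congr rfl fun i _ => ?_
        split_ifs <;> simp [hF]
      rw [h1, h2, ← add_assoc, Finset.sum_inter_add_sum_sdiff]
    refine ⟨fun i => if i ∈ ι₁ then s i else 0, T, Q, ?_, ?_⟩
    · rw [← hst]
      have h := congrFun (gen (M := X → ℝ≥0) (fun a _ _ => a) (fun _ => rfl)) (p ⟨0, hm⟩)
      simp only [Pi.add_apply, Finset.sum_apply] at h
      exact h.symm
    · exact gen (fun a x => (a : ℝ≥0∞) • Measure.dirac x) (by simp)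
end

section
/- Let Σ^{k_1,l_1}_{ι_1} and Σ^{k_2,l_2}_{ι_2} be strata associated to admissible triplets. Then the intersection Σ^{k_1,l_1}_{ι_1} ∩ Σ^{k_2,l_2}_{ι_2} is equal to the union of all strata Σ^{k,l}_ι, over admissible triplets (k, l, ι), such that Σ^{k,l}_ι ⊆ Σ^{k_1,l_1}_{ι_1} and Σ^{k,l}_ι ⊆ Σ^{k_2,l_2}_{ι_2}. -/
open MeasureTheory Metric
open scoped NNReal ENNReal BigOperators

variable {X : Type*}

open Classical in
/-- A measure in a stratum is carried by its finite set of atoms. -/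
lemma stratum_atoms [MeasurableSpace X] {m : ℕ} (p : Fin m → X)
    (k : ℕ) (ι : Finset (Fin m)) (μ : Measure X) (h : μ ∈ Stratum p k ι) :
    μ Set.univ = 1 ∧ ∃ (S : Finset X) (w : X → ℝ≥0), (∀ x ∈ S, w x ≠ 0) ∧
      (S \ ι.image p).card ≤ k ∧ μ = ∑ x ∈ S, (w x : ℝ≥0∞) • Measure.dirac x := by
  obtain ⟨s, t, q, hsum, rfl⟩ := h
  constructor
  · simp only [Measure.add_apply, Measure.finsetSum_apply, Measure.smul_apply, measure_univ,
      smul_eq_mul, mul_one]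
    exact_mod_cast hsum
  set S₀ : Finset X := ι.image p ∪ Finset.univ.image q with hS₀
  set w : X → ℝ≥0 := fun x => (∑ i ∈ ι with p i = x, s i) + ∑ j with q j = x, t j with hw
  refine ⟨S₀.filter (fun x => w x ≠ 0), w, ?_, ?_, ?_⟩
  · intro x hx
    exact (Finset.mem_filter.1 hx).2
  · have hsub : (S₀.filter (fun x => w x ≠ 0)) \ ι.image p ⊆ Finset.univ.image q := by
      intro x hx
      simp only [Finset.mem_sdiff, Finset.mem_filter, hS₀, Finset.mem_union] at hx
      tauto
    calc _ ≤ _ := Finset.card_le_card hsub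
      _ ≤ _ := Finset.card_image_le
      _ = k := by simp
  · rw [Finset.sum_filter_of_ne]
    · have e1 : ∑ i ∈ ι, ((s i : ℝ≥0∞) • Measure.dirac (p i)) =
          ∑ x ∈ S₀, ∑ i ∈ ι with p i = x, ((s i : ℝ≥0∞) • Measure.dirac x) := by
        rw [← Finset.sum_fiberwise_of_maps_to (s := ι) (t := S₀) (g := p)]
        · refine Finset.sum_congr rfl fun x _ => Finset.sum_congr rfl fun i hi => ?_
          rw [(Finset.mem_filter.1 hi).2]
        · intro i hi
          exact Finset.mem_union_left _ (Finset.mem_image_of_mem _ hi)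
      have e2 : ∑ j, ((t j : ℝ≥0∞) • Measure.dirac (q j)) =
          ∑ x ∈ S₀, ∑ j with q j = x, ((t j : ℝ≥0∞) • Measure.dirac x) := by
        rw [← Finset.sum_fiberwise_of_maps_to (s := Finset.univ) (t := S₀) (g := q)]
        · refine Finset.sum_congr rfl fun x _ => Finset.sum_congr rfl fun i hi => ?_
          rw [(Finset.mem_filter.1 hi).2]
        · intro i hi
          exact Finset.mem_union_right _ (Finset.mem_image_of_mem _ hi)
      rw [e1, e2, ← Finset.sum_add_distrib]
      refine Finset.sum_congr rfl fun x _ => ?_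
      rw [← Finset.sum_smul, ← Finset.sum_smul, ← add_smul]
      congr 1
      simp [hw]
    · intro x _ hx h0
      apply hx
      simp [h0]

open Classical in
/-- Converse: a finitely supported probability measure with few atoms lies in the stratum. -/
lemma mem_stratum_of_atoms [Nonempty X] [MeasurableSpace X] {m : ℕ} (p : Fin m → X)
    (hp : Function.Injective p) (k : ℕ) (ι : Finset (Fin m)) (μ : Measure X)
    (h1 : μ Set.univ = 1) (S : Finset X) (w : X → ℝ≥0) (hc : (S \ ι.image p).card ≤ k)
    (hμ : μ = ∑ x ∈ S, (w x : ℝ≥0∞) • Measure.dirac x) : μ ∈ Stratum p k ι := by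
  obtain ⟨e⟩ : Nonempty ((S \ ι.image p : Finset X) ↪ Fin k) :=
    Function.Embedding.nonempty_of_card_le (by simpa using hc)
  set s : Fin m → ℝ≥0 := fun i => if p i ∈ S then w (p i) else 0 with hs
  set t : Fin k → ℝ≥0 := Function.extend e (fun x => w x.1) 0 with ht
  set q : Fin k → X := Function.extend e (fun x => x.1) (fun _ => Classical.arbitrary X) with hq
  have key : μ = (∑ i ∈ ι, ((s i : ℝ≥0∞) • Measure.dirac (p i)))
        + ∑ j, ((t j : ℝ≥0∞) • Measure.dirac (q j)) := by
    have e2 : ∑ x : (S \ ι.image p : Finset X), ((w x.1 : ℝ≥0∞) • Measure.dirac x.1)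
        = ∑ j, ((t j : ℝ≥0∞) • Measure.dirac (q j)) := by
      refine Fintype.sum_of_injective e e.injective _ _ ?_ ?_
      · intro j hj
        have : t j = 0 := by
          rw [ht, Function.extend_apply' _ _ _ (by simpa using hj)]; rfl
        simp [this]
      · intro x
        rw [ht, hq, e.injective.extend_apply, e.injective.extend_apply]
    have e1 : ∑ x ∈ S ∩ ι.image p, ((w x : ℝ≥0∞) • Measure.dirac x)
        = ∑ i ∈ ι, ((s i : ℝ≥0∞) • Measure.dirac (p i)) := by
      rw [Finset.inter_comm, ← Finset.filter_mem_eq_inter, Finset.sum_filter,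
        Finset.sum_image (fun a _ b _ h => hp h)]
      refine Finset.sum_congr rfl fun i _ => ?_
      by_cases hi : p i ∈ S <;> simp [hs, hi]
    rw [← e1, ← e2, hμ, Finset.sum_coe_sort (S \ ι.image p)
      (fun x => (w x : ℝ≥0∞) • Measure.dirac x), Finset.sum_inter_add_sum_sdiff]
  refine ⟨s, t, q, ?_, key⟩
  rw [key] at h1
  simp only [Measure.add_apply, Measure.finsetSum_apply, Measure.smul_apply, measure_univ,
      smul_eq_mul, mul_one] at h1
  exact_mod_cast h1

/-- The support of a finite atomic measure is determined by the measure. -/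
lemma atoms_iff [MeasurableSpace X] [MeasurableSingletonClass X] (S : Finset X) (w : X → ℝ≥0)
    (hw : ∀ x ∈ S, w x ≠ 0) (x : X) :
    x ∈ S ↔ (∑ y ∈ S, (w y : ℝ≥0∞) • Measure.dirac y : Measure X) {x} ≠ 0 := by
  classical
  simp only [Measure.finsetSum_apply, Measure.smul_apply, smul_eq_mul, ne_eq,
    Finset.sum_eq_zero_iff, not_forall]
  constructor
  · intro hx
    exact ⟨x, hx, by simp [hw x hx]⟩
  · rintro ⟨y, hy, h⟩
    by_cases hxy : y = x
    · exact hxy ▸ hy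
    · exact absurd (by simp [hxy]) h

/-- Sufficient condition for inclusion of strata. -/
lemma stratum_subset [Nonempty X] [MeasurableSpace X] {m : ℕ} (p : Fin m → X)
    (hp : Function.Injective p) (k k' : ℕ) (ι ι' : Finset (Fin m))
    (h : k + (ι \ ι').card ≤ k') : Stratum p k ι ⊆ Stratum p k' ι' := by
  classical
  intro μ hμ
  obtain ⟨h1, S, w, -, hc, hS⟩ := stratum_atoms p k ι μ hμ
  refine mem_stratum_of_atoms p hp k' ι' μ h1 S w ?_ hS
  have hsub : S \ ι'.image p ⊆ (S \ ι.image p) ∪ (ι \ ι').image p := by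
    intro x hx
    simp only [Finset.mem_sdiff, Finset.mem_union, Finset.mem_image] at hx ⊢
    grind
  have a := Finset.card_le_card hsub
  have b := Finset.card_union_le (S \ ι.image p) ((ι \ ι').image p)
  have c := Finset.card_image_le (s := ι \ ι') (f := p)
  convert (a.trans (b.trans ?_)) using 1
  convert (show (S \ ι.image p).card + ((ι \ ι').image p).card ≤ k' from ?_) using 1
  have hc' : (S \ ι.image p).card ≤ k := by convert hc
  omega

/-- the intersection of two admissible strata is the union of all admissible
strata contained in both. -/
theorem stratum_inter_eq_union
    [MetricSpace X] [CompactSpace X] [Infinite X] [MeasurableSpace X] [BorelSpace X]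
    {m : ℕ} (hm : 1 ≤ m) (p : Fin m → X) (hp : Function.Injective p)
    (α : Fin m → ℝ) (hα : ∀ j, -1 < α j ∧ α j < 0) (hmono : Monotone α)
    (ρ : ℝ) (hρ : 0 < ρ)
    (k₁ k₂ : ℕ) (ι₁ ι₂ : Finset (Fin m))
    (h₁ : Admissible α ρ k₁ ι₁) (h₂ : Admissible α ρ k₂ ι₂) :
    Stratum p k₁ ι₁ ∩ Stratum p k₂ ι₂ =
      ⋃ (k : ℕ) (ι : Finset (Fin m))
        (_ : Admissible α ρ k ι ∧ Stratum p k ι ⊆ Stratum p k₁ ι₁ ∧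
             Stratum p k ι ⊆ Stratum p k₂ ι₂),
        Stratum p k ι := by
  classical
  apply Set.Subset.antisymm
  · rintro μ ⟨hμ1, hμ2⟩
    obtain ⟨h1, S, w, hw, hc1, hS⟩ := stratum_atoms p k₁ ι₁ μ hμ1
    obtain ⟨-, S', w', hw', hc2, hS'⟩ := stratum_atoms p k₂ ι₂ μ hμ2
    have hSS : S' = S := by
      ext x
      rw [atoms_iff S w hw, atoms_iff S' w' hw', ← hS, ← hS']
    subst hSS
    set ι : Finset (Fin m) := Finset.univ.filter (fun i => p i ∈ S') with hι
    have card_le : ∀ (k' : ℕ) (ι' : Finset (Fin m)), (S' \ ι'.image p).card ≤ k' →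
        (S' \ ι.image p).card + (ι \ ι').card ≤ k' := by
      intro k' ι' h
      rw [← Finset.card_image_of_injective (ι \ ι') hp, ← Finset.card_union_of_disjoint]
      · refine (Finset.card_le_card ?_).trans h
        intro x hx
        simp only [Finset.mem_sdiff, Finset.mem_union, Finset.mem_image, hι,
          Finset.mem_filter, Finset.mem_univ, true_and] at hx ⊢
        rcases hx with ⟨hx, hn⟩ | ⟨i, ⟨hi, hi'⟩, rfl⟩
        · refine ⟨hx, ?_⟩
          rintro ⟨i, -, rfl⟩
          exact hn ⟨i, hx, rfl⟩
        · refine ⟨hi, ?_⟩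
          rintro ⟨j, hj, hji⟩
          exact hi' (hp hji ▸ hj)
      · rw [Finset.disjoint_left]
        intro x hx hx'
        exact (Finset.mem_sdiff.1 hx).2
          (Finset.image_subset_image Finset.sdiff_subset hx')
    have c1 := card_le k₁ ι₁ (by convert hc1)
    have c2 := card_le k₂ ι₂ (by convert hc2)
    simp only [Set.mem_iUnion]
    refine ⟨(S' \ ι.image p).card, ι, ⟨?_, stratum_subset p hp _ _ _ _ c1,
      stratum_subset p hp _ _ _ _ c2⟩, mem_stratum_of_atoms p hp _ _ μ h1 S' w (by
        apply le_of_eq; congr) hS⟩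
    refine lt_of_le_of_lt ?_ h₁
    refine mul_le_mul_of_nonneg_left ?_ (by positivity)
    have d1 : ∑ j ∈ ι, (1 + α j) = ∑ j ∈ ι ∩ ι₁, (1 + α j) + ∑ j ∈ ι \ ι₁, (1 + α j) :=
      (Finset.sum_inter_add_sum_sdiff _ _ _).symm
    have d2 : ∑ j ∈ ι ∩ ι₁, (1 + α j) ≤ ∑ j ∈ ι₁, (1 + α j) :=
      Finset.sum_le_sum_of_subset_of_nonneg Finset.inter_subset_right
        (fun j _ _ => by linarith [(hα j).1])
    have d3 : ∑ j ∈ ι \ ι₁, (1 + α j) ≤ ((ι \ ι₁).card : ℝ) := by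
      have := Finset.sum_le_card_nsmul (ι \ ι₁) (fun j => 1 + α j) 1
        (fun j _ => by linarith [(hα j).2])
      simpa using this
    have c1' : ((S' \ ι.image p).card : ℝ) + ((ι \ ι₁).card : ℝ) ≤ k₁ := by exact_mod_cast c1
    linarith
  · intro μ hμ
    simp only [Set.mem_iUnion] at hμ
    obtain ⟨k, ι, ⟨-, ha, hb⟩, h⟩ := hμ
    exact ⟨ha h, hb h⟩
end

section
/- Let (X, dX) be a compact metric space and μ a finite Borel measure on X. Let l ≥ 1 be an integer and let ε > 0 and r > 0. Then there exist ε̄ ∈ (0, ε) and r̄ > 0, depending only on X, μ, l, ε and r, with the following property: for every nonnegative function f ∈ L^1(X, μ) with ∫_X f dμ = 1 which satisfies ∫_{B_r(x_1) ∪ … ∪ B_r(x_l)} f dμ < 1 − ε for every l-tuple of points x_1, …, x_l ∈ X, there exist points x̄_1, …, x̄_{l+1} ∈ X such that ∫_{B_{r̄}(x̄_i)} f dμ ≥ ε̄ for every i ∈ {1, …, l+1} and the balls B_{2r̄}(x̄_1), …, B_{2r̄}(x̄_{l+1}) are pairwise disjoint. -/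
open MeasureTheory Metric
open scoped NNReal ENNReal BigOperators

/-- a quantitative covering/concentration alternative on a compact metric
measure space: if no `l` balls of radius `r` capture mass `1 - ε` of `f dμ`, then `l + 1`
well-separated balls of a fixed radius `r̄` each capture a fixed amount `ε̄` of mass. -/
theorem concentration_alternative
    {X : Type*} [MetricSpace X] [CompactSpace X] [MeasurableSpace X] [BorelSpace X]
    (μ : MeasureTheory.Measure X) [MeasureTheory.IsFiniteMeasure μ]
    (l : ℕ) (hl : 1 ≤ l) (ε r : ℝ) (hε : 0 < ε) (hr : 0 < r) :
    ∃ εb rb : ℝ, 0 < εb ∧ εb < ε ∧ 0 < rb ∧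
      ∀ f : X → ℝ, MeasureTheory.Integrable f μ → (∀ x, 0 ≤ f x) →
        (∫ x, f x ∂μ) = 1 →
        (∀ x : Fin l → X, (∫ y in ⋃ i, Metric.ball (x i) r, f y ∂μ) < 1 - ε) →
        ∃ xb : Fin (l + 1) → X,
          (∀ i, εb ≤ ∫ y in Metric.ball (xb i) rb, f y ∂μ) ∧
          (∀ i j, i ≠ j →
            Disjoint (Metric.ball (xb i) (2 * rb)) (Metric.ball (xb j) (2 * rb))) := by
  classical
  have hrb : 0 < r / 5 := by positivity
  obtain ⟨t, -, htf, ht⟩ := finite_cover_balls_of_compact (isCompact_univ (X := X)) hrb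
  lift t to Finset X using htf
  refine ⟨ε / (t.card + 2), r / 5, by positivity, ?_, hrb, ?_⟩
  · rw [div_lt_iff₀ (by positivity)]
    have : (0 : ℝ) ≤ t.card := by positivity
    nlinarith
  intro f hf hf0 hf1 hx
  set δ : ℝ := ε / (t.card + 2) with hδ
  have hδ0 : 0 < δ := by positivity
  have hN : t.card * δ ≤ ε := by
    rw [hδ, mul_div_assoc', div_le_iff₀ (by positivity)]
    nlinarith
  set ν : Measure X := μ.withDensity (fun x => ENNReal.ofReal (f x)) with hν
  have hνS : ∀ S : Set X, MeasurableSet S → ν.real S = ∫ y in S, f y ∂μ := by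
    intro S hS
    rw [Measure.real, hν, withDensity_apply _ hS,
      integral_eq_lintegral_of_nonneg_ae (Filter.Eventually.of_forall hf0)
        hf.aestronglyMeasurable.restrict]
  haveI : IsFiniteMeasure ν := isFiniteMeasure_withDensity_ofReal hf.2
  have key : ∀ x : Fin l → X, ∃ c, δ ≤ (∫ y in ball c (r / 5), f y ∂μ) ∧
      ∀ i, 4 * (r / 5) ≤ dist c (x i) := by
    intro x
    by_contra! hcon
    have hcov : (Set.univ : Set X) ⊆ (⋃ i, ball (x i) r) ∪
        ⋃ c ∈ t.filter (fun c => ν.real (ball c (r / 5)) < δ), ball c (r / 5) := by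
      intro y hy
      obtain ⟨c, hc, hyc⟩ := Set.mem_iUnion₂.1 (ht hy)
      by_cases hm : ν.real (ball c (r / 5)) < δ
      · right
        exact Set.mem_iUnion₂.2 ⟨c, Finset.mem_filter.2 ⟨hc, hm⟩, hyc⟩
      · left
        rw [hνS _ measurableSet_ball] at hm
        obtain ⟨i, hi⟩ := hcon c (not_lt.1 hm)
        refine Set.mem_iUnion.2 ⟨i, ?_⟩
        rw [mem_ball] at hyc ⊢
        linarith [dist_triangle y c (x i)]
    have h1 : ν.real Set.univ = 1 := by
      rw [hνS _ MeasurableSet.univ, setIntegral_univ, hf1]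
    have h2 := measureReal_mono (μ := ν) hcov
    have h3 := measureReal_union_le (μ := ν) (⋃ i, ball (x i) r)
        (⋃ c ∈ t.filter (fun c => ν.real (ball c (r / 5)) < δ), ball c (r / 5))
    have h4 := measureReal_biUnion_finset_le (μ := ν)
      (t.filter (fun c => ν.real (ball c (r / 5)) < δ)) (fun c => ball c (r / 5))
    have h5 : ∑ c ∈ t.filter (fun c => ν.real (ball c (r / 5)) < δ), ν.real (ball c (r / 5))
        ≤ t.card * δ := by
      refine (Finset.sum_le_card_nsmul _ _ δ
        (fun c hc => (Finset.mem_filter.1 hc).2.le)).trans ?_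
      rw [nsmul_eq_mul]
      gcongr
      exact Finset.filter_subset _ _
    have h6 := hx x
    rw [← hνS _ (MeasurableSet.iUnion fun i => measurableSet_ball)] at h6
    linarith
  have hne : Nonempty X := by
    by_contra h
    rw [not_nonempty_iff] at h
    simp [integral_of_isEmpty] at hf1
  have ind : ∀ k ≤ l + 1, ∃ x : ℕ → X,
      (∀ i < k, δ ≤ ∫ y in ball (x i) (r / 5), f y ∂μ) ∧
      ∀ i < k, ∀ j < i, 4 * (r / 5) ≤ dist (x i) (x j) := by
    intro k
    induction k with
    | zero => exact fun _ => ⟨fun _ => hne.some, by simp, by simp⟩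
    | succ k ih =>
      intro hk
      obtain ⟨x, hx1, hx2⟩ := ih (by omega)
      obtain ⟨c, hc1, hc2⟩ := key (fun i => x i)
      refine ⟨Function.update x k c, ?_, ?_⟩
      · intro i hi
        rcases eq_or_ne i k with rfl | h
        · simpa using hc1
        · rw [Function.update_of_ne h]
          exact hx1 i (by omega)
      · intro i hi j hj
        rw [Function.update_of_ne (show j ≠ k by omega)]
        rcases eq_or_ne i k with rfl | h
        · simpa using hc2 ⟨j, by omega⟩
        · rw [Function.update_of_ne h]
          exact hx2 i (by omega) j hj
  obtain ⟨x, hx1, hx2⟩ := ind (l + 1) le_rfl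
  refine ⟨fun i => x i, fun i => hx1 i i.2, fun i j hij => ball_disjoint_ball ?_⟩
  rcases lt_or_gt_of_ne hij with h | h
  · have := hx2 j j.2 i h
    rw [dist_comm] at this
    linarith
  · have := hx2 i i.2 j h
    linarith
end

section
/- Assume 1 ≤ k ≤ m, ρ < 4π, ρ > 4π(1 + α_i) for every 1 ≤ i ≤ k, ρ < 4π(1 + α_i) for every k + 1 ≤ i ≤ m, and ρ < 4π((1 + α_i) + (1 + α_j)) for every pair of indices 1 ≤ i < j ≤ m. Then the space of formal barycenters satisfies Σ_{ρ,α} = { δ_{p_1}, …, δ_{p_k} }, i.e. it consists exactly of the k Dirac masses at the singular points p_1, …, p_k. -/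
open MeasureTheory Metric
open scoped NNReal ENNReal BigOperators Classical

variable {X : Type*}

/-- The weighted cardinality function `χ`: `χ(p_j) = 1 + α_j`, `χ(q) = 1` for regular `q`
(for `p` injective). -/
noncomputable def chi {m : ℕ} (p : Fin m → X) (α : Fin m → ℝ) (q : X) : ℝ :=
  1 + ∑ j, if p j = q then α j else 0

/-- The space of formal barycenters `Σ_{ρ,α}`, as a set of (probability) measures. -/
noncomputable def BarM [MeasurableSpace X] {m : ℕ} (p : Fin m → X) (α : Fin m → ℝ)
    (ρ : ℝ) : Set (Measure X) :=
  {μ | ∃ (J : Finset X) (t : X → ℝ≥0),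
    (∑ q ∈ J, t q) = 1 ∧
    4 * Real.pi * (∑ q ∈ J, chi p α q) < ρ ∧
    μ = ∑ q ∈ J, ((t q : ℝ≥0∞) • Measure.dirac q)}

theorem chi_apply_aux {m : ℕ} (p : Fin m → X) (hp : Function.Injective p)
    (α : Fin m → ℝ) (i : Fin m) : chi p α (p i) = 1 + α i := by
  unfold chi
  congr 1
  rw [Finset.sum_eq_single i]
  · simp
  · intro j _ hj
    rw [if_neg]
    intro h
    exact hj (hp h)
  · simp

theorem chi_regular_aux {m : ℕ} (p : Fin m → X)
    (α : Fin m → ℝ) (q : X) (hq : ∀ i, p i ≠ q) : chi p α q = 1 := by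
  unfold chi
  simp [hq]

/-- under the stated algebraic conditions, `Σ_{ρ,α}` consists exactly of the
`k` Dirac masses `δ_{p_1}, …, δ_{p_k}`. -/
theorem barycenters_eq_diracs
    [MetricSpace X] [CompactSpace X] [Infinite X] [MeasurableSpace X] [BorelSpace X]
    {m : ℕ} (hm : 1 ≤ m) (p : Fin m → X) (hp : Function.Injective p)
    (α : Fin m → ℝ) (hα : ∀ j, -1 < α j ∧ α j < 0) (hmono : Monotone α)
    (ρ : ℝ) (hρ : 0 < ρ)
    (k : ℕ) (hk1 : 1 ≤ k) (hkm : k ≤ m)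
    (hρ4 : ρ < 4 * Real.pi)
    (hlow : ∀ i : Fin m, (i : ℕ) < k → 4 * Real.pi * (1 + α i) < ρ)
    (hhigh : ∀ i : Fin m, k ≤ (i : ℕ) → ρ < 4 * Real.pi * (1 + α i))
    (hpair : ∀ i j : Fin m, i < j → ρ < 4 * Real.pi * ((1 + α i) + (1 + α j))) :
    BarM p α ρ = {μ : Measure X | ∃ i : Fin m, (i : ℕ) < k ∧ μ = Measure.dirac (p i)} := by
  have hpi := Real.pi_pos
  have hpos : ∀ q, 0 ≤ chi p α q := by
    intro q
    by_cases h : ∃ i, p i = q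
    · obtain ⟨i, rfl⟩ := h
      rw [chi_apply_aux p hp]
      linarith [(hα i).1]
    · push Not at h
      rw [chi_regular_aux p α q h]
      norm_num
  ext μ
  constructor
  · rintro ⟨J, t, ht, hJ, rfl⟩
    have hsub : ∀ S : Finset X, S ⊆ J → 4 * Real.pi * (∑ q ∈ S, chi p α q) < ρ := by
      intro S hS
      refine lt_of_le_of_lt ?_ hJ
      have := Finset.sum_le_sum_of_subset_of_nonneg (f := chi p α) hS
        (fun q _ _ => hpos q)
      gcongr
    have hsing : ∀ q ∈ J, ∃ i, p i = q := by
      intro q hq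
      by_contra h
      push Not at h
      have := hsub {q} (by simpa using hq)
      rw [Finset.sum_singleton, chi_regular_aux p α q h] at this
      linarith
    have hne : J.Nonempty := by
      rw [Finset.nonempty_iff_ne_empty]
      rintro rfl
      simp at ht
    obtain ⟨q, hq⟩ := hne
    obtain ⟨i, rfl⟩ := hsing q hq
    have hij : ∀ a b : Fin m, p a ∈ J → p b ∈ J → ¬ a < b := by
      intro a b ha hb hab
      have := hsub {p a, p b} (by
        intro x hx
        simp only [Finset.mem_insert, Finset.mem_singleton] at hx
        rcases hx with rfl | rfl <;> assumption)
      rw [Finset.sum_pair (fun h => hab.ne (hp h)), chi_apply_aux p hp,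
        chi_apply_aux p hp] at this
      linarith [hpair a b hab]
    have hJe : J = {p i} := by
      rw [Finset.eq_singleton_iff_unique_mem]
      refine ⟨hq, fun x hx => ?_⟩
      obtain ⟨j, rfl⟩ := hsing x hx
      rcases lt_trichotomy i j with h | h | h
      · exact absurd h (hij i j hq hx)
      · rw [h]
      · exact absurd h (hij j i hx hq)
    subst hJe
    rw [Finset.sum_singleton] at ht hJ
    rw [chi_apply_aux p hp] at hJ
    refine ⟨i, ?_, ?_⟩
    · by_contra h
      linarith [hhigh i (not_lt.mp h)]
    · rw [Finset.sum_singleton, ht]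
      simp
  · rintro ⟨i, hi, rfl⟩
    refine ⟨{p i}, fun _ => 1, by simp, ?_, by simp⟩
    rw [Finset.sum_singleton, chi_apply_aux p hp]
    exact hlow i hi
end

section
/- Assume 4π(1 + α_1) < ρ and that Σ_{ρ,α} is p_1-stable, i.e. for every σ ∈ Σ_{ρ,α} and every t ∈ [0, 1] the measure (1 − t)σ + t δ_{p_1} belongs to Σ_{ρ,α}. Then Σ_{ρ,α}, endowed with the weak topology, is contractible: the map H : Σ_{ρ,α} × [0, 1] → Σ_{ρ,α} defined by H(σ, t) = (1 − t)σ + t δ_{p_1} is continuous, H(σ, 0) = σ and H(σ, 1) = δ_{p_1} for every σ, so Σ_{ρ,α} deformation-retracts onto the point δ_{p_1}. -/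
open MeasureTheory Metric
open scoped NNReal ENNReal BigOperators Classical

variable {X : Type*}

/-- The space of formal barycenters `Σ_{ρ,α}`, as a set of probability measures (endowed,
as a subspace of `ProbabilityMeasure X`, with the topology of weak convergence). -/
noncomputable def Bar [MetricSpace X] [MeasurableSpace X] {m : ℕ} (p : Fin m → X)
    (α : Fin m → ℝ) (ρ : ℝ) : Set (ProbabilityMeasure X) :=
  {μ | ∃ (J : Finset X) (t : X → ℝ≥0),
    (∑ q ∈ J, t q) = 1 ∧
    4 * Real.pi * (∑ q ∈ J, chi p α q) < ρ ∧
    (μ : Measure X) = ∑ q ∈ J, ((t q : ℝ≥0∞) • Measure.dirac q)}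

/-- The straight segment from `μ` to `δ_a`, as a probability measure. -/
noncomputable def segMeas [MeasurableSpace X] (a : X) (t : ℝ) (h0 : 0 ≤ t) (h1 : t ≤ 1)
    (μ : ProbabilityMeasure X) : ProbabilityMeasure X :=
  ⟨ENNReal.ofReal (1 - t) • (μ : Measure X) + ENNReal.ofReal t • Measure.dirac a, by
    constructor
    simp only [Measure.coe_add, Measure.coe_smul, Pi.add_apply, Pi.smul_apply, measure_univ,
      smul_eq_mul, mul_one]
    rw [← ENNReal.ofReal_add (by linarith) h0]
    simp⟩

theorem segMeas_integral [MetricSpace X] [MeasurableSpace X] [BorelSpace X]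
    (a : X) (t : ℝ) (h0 : 0 ≤ t) (h1 : t ≤ 1)
    (μ : ProbabilityMeasure X) (f : BoundedContinuousFunction X ℝ) :
    ∫ x, f x ∂(segMeas a t h0 h1 μ : Measure X)
      = (1 - t) * ∫ x, f x ∂(μ : Measure X) + t * f a := by
  change ∫ x, f x ∂(ENNReal.ofReal (1 - t) • (μ : Measure X)
    + ENNReal.ofReal t • Measure.dirac a) = _
  rw [integral_add_measure, integral_smul_measure, integral_smul_measure, integral_dirac,
    ENNReal.toReal_ofReal (by linarith), ENNReal.toReal_ofReal h0]
  · simp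
  · exact (f.integrable _).smul_measure ENNReal.ofReal_ne_top
  · exact (f.integrable _).smul_measure ENNReal.ofReal_ne_top

/-- if `4π(1+α_1) < ρ` and `Σ_{ρ,α}` is `p_1`-stable (the segment from any
`σ ∈ Σ_{ρ,α}` to `δ_{p_1}` stays in `Σ_{ρ,α}`), then `Σ_{ρ,α}`, with the weak topology,
is contractible. -/
theorem p1_stable_contractible
    [MetricSpace X] [CompactSpace X] [Infinite X] [MeasurableSpace X] [BorelSpace X]
    {m : ℕ} (hm : 1 ≤ m) (p : Fin m → X) (hp : Function.Injective p)
    (α : Fin m → ℝ) (hα : ∀ j, -1 < α j ∧ α j < 0) (hmono : Monotone α)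
    (ρ : ℝ) (hρ : 0 < ρ)
    (hρ1 : 4 * Real.pi * (1 + α ⟨0, hm⟩) < ρ)
    (hstab : ∀ μ ∈ Bar p α ρ, ∀ t : ℝ, 0 ≤ t → t ≤ 1 → ∀ ν : ProbabilityMeasure X,
      (ν : Measure X) = ENNReal.ofReal (1 - t) • (μ : Measure X)
          + ENNReal.ofReal t • Measure.dirac (p ⟨0, hm⟩) →
      ν ∈ Bar p α ρ) :
    ContractibleSpace ↥(Bar p α ρ) := by
  have hd : (⟨Measure.dirac (p ⟨0, hm⟩), inferInstance⟩ : ProbabilityMeasure X) ∈ Bar p α ρ := by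
    refine ⟨{p ⟨0, hm⟩}, fun _ => 1, by simp, ?_, by simp⟩
    have : chi p α (p ⟨0, hm⟩) = 1 + α ⟨0, hm⟩ := by
      simp [chi, hp.eq_iff]
    simpa [this] using hρ1
  rw [contractible_iff_id_nullhomotopic]
  refine ⟨⟨_, hd⟩, ⟨?_⟩⟩
  refine
    { toFun := fun x => ⟨segMeas (p ⟨0, hm⟩) x.1 x.1.2.1 x.1.2.2 x.2.1,
        hstab _ x.2.2 _ x.1.2.1 x.1.2.2 _ rfl⟩
      continuous_toFun := ?_
      map_zero_left := ?_
      map_one_left := ?_ }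
  · refine Continuous.subtype_mk ?_ _
    rw [continuous_iff_continuousAt]
    intro x
    unfold ContinuousAt
    rw [ProbabilityMeasure.tendsto_iff_forall_integral_tendsto]
    intro f
    simp only [segMeas_integral]
    have h1 : Filter.Tendsto (fun y : unitInterval × ↥(Bar p α ρ) => ((y.1 : unitInterval) : ℝ))
        (nhds x) (nhds (x.1 : ℝ)) :=
      (continuous_subtype_val.comp continuous_fst).tendsto x
    have h2 : Filter.Tendsto (fun y : unitInterval × ↥(Bar p α ρ) => (y.2 : ProbabilityMeasure X))
        (nhds x) (nhds (x.2 : ProbabilityMeasure X)) :=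
      (continuous_subtype_val.comp continuous_snd).tendsto x
    have h3 := ProbabilityMeasure.tendsto_iff_forall_integral_tendsto.1 h2 f
    exact ((h1.const_sub 1).mul h3).add (h1.mul_const _)
  · intro x
    apply Subtype.ext
    apply Subtype.ext
    simp [segMeas]
  · intro x
    apply Subtype.ext
    apply Subtype.ext
    simp [segMeas]
end

section
/- Let X in addition be a nonempty compact connected metrizable topological 2-manifold without boundary (every point of X has an open neighborhood homeomorphic to ℝ²). Assume m ≥ 1 and 4π < ρ < min(8π, 4π(2 + α_1)). Then Σ_{ρ,α}, endowed with the weak topology, is not contractible. -/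
open MeasureTheory Metric
open scoped NNReal ENNReal BigOperators Classical

variable {X : Type*}

open Topology
open scoped Topology


/-- `f` has a continuous square root on a punctured neighbourhood of `a`. -/
def EvenAt {T : Type*} [TopologicalSpace T] (f : T → ℂ) (a : T) : Prop :=
  ∃ V ∈ 𝓝 a, ∃ s : T → ℂ, ContinuousOn s (V \ {a}) ∧ ∀ x ∈ V \ {a}, s x ^ 2 = f x

lemma EvenAt.mul {T : Type*} [TopologicalSpace T] {f g : T → ℂ} {a : T} (hf : EvenAt f a)
    (hg : EvenAt g a) : EvenAt (fun x => f x * g x) a := by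
  obtain ⟨V, hV, s, hs, h⟩ := hf
  obtain ⟨W, hW, t, ht, h'⟩ := hg
  refine ⟨V ∩ W, Filter.inter_mem hV hW, fun x => s x * t x, ?_, ?_⟩
  · exact (hs.mono (by intro x hx; exact ⟨hx.1.1, hx.2⟩)).mul
      (ht.mono (by intro x hx; exact ⟨hx.1.2, hx.2⟩))
  · intro x hx
    simp only
    rw [mul_pow, h x ⟨hx.1.1, hx.2⟩, h' x ⟨hx.1.2, hx.2⟩]

lemma EvenAt.congr {T : Type*} [TopologicalSpace T] {f g : T → ℂ} {a : T} (hf : EvenAt f a)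
    (h : ∃ W ∈ 𝓝 a, ∀ x ∈ W, x ≠ a → f x = g x) : EvenAt g a := by
  obtain ⟨V, hV, s, hs, h1⟩ := hf
  obtain ⟨W, hW, h'⟩ := h
  refine ⟨V ∩ W, Filter.inter_mem hV hW, s, 
    hs.mono (by intro x hx; exact ⟨hx.1.1, hx.2⟩), ?_⟩
  intro x hx
  rw [h1 x ⟨hx.1.1, hx.2⟩, h' x hx.1.2 hx.2]

lemma evenAt_of_ne_zero {T : Type*} [TopologicalSpace T] {u : T → ℂ} {a : T}
    (hu : ∃ W ∈ 𝓝 a, ContinuousOn u W) (h0 : u a ≠ 0) : EvenAt u a := by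
  obtain ⟨W, hW, hc⟩ := hu
  have hca : ContinuousAt u a := hc.continuousAt hW
  have h1 : ∀ᶠ x in 𝓝 a, u x / u a ∈ Complex.slitPlane := by
    have : ContinuousAt (fun x => u x / u a) a := hca.div_const _
    apply this.eventually_mem
    apply Complex.isOpen_slitPlane.mem_nhds
    simp [h0]
  obtain ⟨c, hc2⟩ := IsAlgClosed.exists_pow_nat_eq (u a) (n := 2) (by norm_num)
  refine ⟨W ∩ {x | u x / u a ∈ Complex.slitPlane}, Filter.inter_mem hW h1,
    fun x => c * (u x / u a) ^ (1 / 2 : ℂ), ?_, ?_⟩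
  · have h2 : ContinuousOn (fun x => u x / u a) 
      ((W ∩ {x | u x / u a ∈ Complex.slitPlane}) \ {a}) :=
      (hc.div_const _).mono (by intro x hx; exact hx.1.1)
    apply ContinuousOn.mul continuousOn_const
    exact h2.cpow continuousOn_const (fun x hx => hx.1.2)
  · intro x hx
    have : ((u x / u a) ^ (1 / 2 : ℂ)) ^ 2 = u x / u a := by
      rw [← Complex.cpow_nat_mul]; simp
    simp only
    rw [mul_pow, hc2, this]
    field_simp

lemma not_evenAt_sub (a : ℂ) : ¬ EvenAt (fun z : ℂ => z - a) a := by
  rintro ⟨V, hV, s, hs, h⟩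
  obtain ⟨r, hr, hrV⟩ := Metric.mem_nhds_iff.1 hV
  set P : ℝ → ℂ := fun t => a + (r / 2 : ℝ) * Complex.exp (t * Complex.I) with hP
  have hPc : Continuous P := by fun_prop
  have hr2 : ((r / 2 : ℝ) : ℂ) ≠ 0 := by
    have : r / 2 ≠ 0 := by positivity
    exact_mod_cast this
  have hPm : ∀ t, P t ∈ V \ {a} := by
    intro t
    refine ⟨hrV ?_, ?_⟩
    · rw [Metric.mem_ball, dist_eq_norm]
      simp only [hP, add_sub_cancel_left, norm_mul, Complex.norm_exp_ofReal_mul_I, mul_one,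
        Complex.norm_real, Real.norm_eq_abs]
      rw [abs_of_pos (by positivity)]; linarith
    · simp only [hP, Set.mem_singleton_iff, add_eq_left, mul_eq_zero, Complex.exp_ne_zero, or_false]
      exact hr2
  have hsP : Continuous (fun t => s (P t)) := hs.comp_continuous hPc hPm
  set D : ℝ → ℂ := fun t => s (P t) * Complex.exp (-(t * Complex.I / 2)) with hD
  have hDc : Continuous D := hsP.mul (by fun_prop)
  have hD2 : ∀ t, D t ^ 2 = (r / 2 : ℝ) := by
    intro t
    simp only [hD]
    rw [mul_pow, h _ (hPm t), ← Complex.exp_nat_mul]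
    simp only [hP, add_sub_cancel_left]
    rw [mul_assoc, ← Complex.exp_add]
    have : (t * Complex.I + ((2 : ℕ) : ℂ) * -(t * Complex.I / 2)) = 0 := by push_cast; ring
    rw [this]; simp
  have hD0 : D 0 ≠ 0 := by
    intro h0
    have := hD2 0
    rw [h0] at this
    apply hr2; rw [← this]; simp
  have key := isPreconnected_univ.eq_or_eq_neg_of_sq_eq (f := D) (g := fun _ => D 0)
    hDc.continuousOn continuousOn_const (by intro t _; simp [hD2]) (by intro x _; exact hD0)
  have e1 : D (2 * Real.pi) = - D 0 := by
    have hp : P (2 * Real.pi) = P 0 := by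
      simp only [hP]; push_cast
      rw [Complex.exp_two_pi_mul_I]; simp
    simp only [hD]
    rw [hp]; push_cast
    have : -(2 * (Real.pi : ℂ) * Complex.I / 2) = -(Real.pi * Complex.I) := by ring
    rw [this, Complex.exp_neg, Complex.exp_pi_mul_I]; simp
  rcases key with k | k
  · have := k (Set.mem_univ (2 * Real.pi))
    rw [e1] at this
    simp only at this
    exact hD0 (by linear_combination (-1/2 : ℂ) * this)
  · have := k (Set.mem_univ 0)
    simp only [Pi.neg_apply] at this
    exact hD0 (by linear_combination (1/2 : ℂ) * this)

lemma exists_clog {f : ℂ → ℂ} (hf : Continuous f) (h0 : ∀ z, f z ≠ 0) :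
    ∃ M : ℂ → ℂ, Continuous M ∧ ∀ z, Complex.exp (M z) = f z := by
  have hs : IsSimplyConnected (Set.univ : Set ℂ) := by
    have : SimplyConnectedSpace (Set.univ : Set ℂ) :=
      (Homeomorph.Set.univ ℂ).toHomotopyEquiv.simplyConnectedSpace
    exact this
  obtain ⟨M, hM, h⟩ := Complex.exists_continuousOn_eqOn_exp_comp hs isOpen_univ
    hf.continuousOn (by rintro ⟨z, -, hz⟩; exact h0 z hz)
  exact ⟨M, by simpa using hM, fun z => h (Set.mem_univ z)⟩

lemma exp_lift_unique {A : Type*} [TopologicalSpace A] [PreconnectedSpace A] {f g : A → ℂ}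
    (hf : Continuous f) (hg : Continuous g) (h : ∀ x, Complex.exp (f x) = Complex.exp (g x))
    (a : A) (ha : f a = g a) : ∀ x, f x = g x := by
  have := Complex.isCoveringMap_exp.eq_of_comp_eq hf hg (by ext x; simp [h]) a ha
  intro x; rw [this]

lemma polar {f : ℂ → ℂ} (hf : ContinuousOn f {0}ᶜ) (h0 : ∀ z, z ≠ 0 → f z ≠ 0) :
    ∃ (n : ℤ) (L : ℂ → ℂ), ContinuousOn L {0}ᶜ ∧ ∀ z, z ≠ 0 → f z = z ^ n * Complex.exp (L z) := by
  obtain ⟨M, hM, hMe⟩ := exists_clog (f := fun w => f (Complex.exp w))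
    (hf.comp_continuous Complex.continuous_exp (fun w => Complex.exp_ne_zero w))
    (fun w => h0 _ (Complex.exp_ne_zero w))
  obtain ⟨n, hn⟩ : ∃ n : ℤ, M (2 * Real.pi * Complex.I) = M 0 + n * (2 * Real.pi * Complex.I) := by
    apply Complex.exp_eq_exp_iff_exists_int.1
    rw [hMe, hMe, Complex.exp_two_pi_mul_I, Complex.exp_zero]
  have hper : ∀ w, M (w + 2 * Real.pi * Complex.I) = M w + n * (2 * Real.pi * Complex.I) := by
    apply exp_lift_unique (by fun_prop) (by fun_prop) _ 0 (by simpa using hn)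
    intro w
    rw [hMe, Complex.exp_add (M w), hMe, Complex.exp_int_mul, Complex.exp_two_pi_mul_I, Complex.exp_add w,
      Complex.exp_two_pi_mul_I]
    simp
  set G : ℂ → ℂ := fun w => M w - n * w with hG
  have hGc : Continuous G := by fun_prop
  have hGp : Function.Periodic G (2 * Real.pi * Complex.I) := by
    intro w
    simp only [hG]; rw [hper]; ring
  have hGe : ∀ w w', Complex.exp w = Complex.exp w' → G w = G w' := by
    intro w w' h
    obtain ⟨k, hk⟩ := Complex.exp_eq_exp_iff_exists_int.1 h
    rw [hk]; exact hGp.int_mul k w'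
  refine ⟨n, fun z => G (Complex.log z), ?_, ?_⟩
  · intro z hz
    apply ContinuousAt.continuousWithinAt
    have hz' : z ≠ 0 := hz
    have h1 : ContinuousAt (fun y => G (Complex.log (y / z) + Complex.log z)) z := by
      apply hGc.continuousAt.comp
      apply ContinuousAt.add _ continuousAt_const
      apply ContinuousAt.clog (continuousAt_id.div_const _)
      simp [hz']
    apply h1.congr
    have : ∀ᶠ y in 𝓝 z, y ≠ 0 := isOpen_ne.mem_nhds hz'
    filter_upwards [this] with y hy
    apply hGe
    rw [Complex.exp_add, Complex.exp_log hz', Complex.exp_log hy, Complex.exp_log (div_ne_zero hy hz')]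
    field_simp
  · intro z hz
    simp only [hG]
    rw [Complex.exp_sub, hMe, Complex.exp_int_mul, Complex.exp_log hz]
    field_simp


lemma local_polar {f : ℂ → ℂ} (hf : Continuous f) {a : ℂ} {r : ℝ} (hr : 0 < r)
    (h0 : ∀ z, z ≠ a → ‖z - a‖ ≤ r → f z ≠ 0) :
    ∃ (n : ℤ) (L : ℂ → ℂ), ContinuousOn L {0}ᶜ ∧
      ∀ z, z ≠ a → ‖z - a‖ ≤ r → f z = (z - a) ^ n * Complex.exp (L (z - a)) := by
  set ρ : ℂ → ℂ := fun z => a + z * (min 1 (r / ‖z‖) : ℝ) with hρ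
  have hρc : ContinuousOn ρ {0}ᶜ := by
    apply ContinuousOn.add continuousOn_const
    apply ContinuousOn.mul continuousOn_id
    apply Complex.continuous_ofReal.comp_continuousOn
    refine ContinuousOn.inf continuousOn_const ?_
    apply ContinuousOn.div continuousOn_const continuous_norm.continuousOn
    intro x hx
    simpa using hx
  obtain ⟨n, L, hL, h⟩ := polar (f := fun z => f (ρ z)) (hf.comp_continuousOn hρc) (by
    intro z hz
    have hz' : 0 < ‖z‖ := norm_pos_iff.2 hz
    have hm : 0 < min 1 (r / ‖z‖) := lt_min one_pos (by positivity)
    apply h0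
    · simp only [hρ, ne_eq, add_eq_left, mul_eq_zero, not_or]
      exact ⟨hz, by exact_mod_cast hm.ne'⟩
    · simp only [hρ, add_sub_cancel_left, norm_mul, Complex.norm_real, Real.norm_eq_abs]
      rw [abs_of_pos hm]
      calc ‖z‖ * min 1 (r / ‖z‖) ≤ ‖z‖ * (r / ‖z‖) := by gcongr; exact min_le_right _ _
        _ = r := by field_simp)
  refine ⟨n, L, hL, ?_⟩
  intro z hz hzr
  have hz' : 0 < ‖z - a‖ := norm_pos_iff.2 (sub_ne_zero.2 hz)
  rw [← h _ (sub_ne_zero.2 hz)]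
  have : min 1 (r / ‖z - a‖) = 1 := min_eq_left ((one_le_div hz').2 hzr)
  simp only [hρ]
  rw [this]; simp

lemma evenAt_polar_iff {f : ℂ → ℂ} {a : ℂ} {r : ℝ} (hr : 0 < r) {n : ℤ} {L : ℂ → ℂ}
    (hL : ContinuousOn L {0}ᶜ) 
    (h : ∀ z, z ≠ a → ‖z - a‖ ≤ r → f z = (z - a) ^ n * Complex.exp (L (z - a))) :
    EvenAt f a ↔ ¬ Odd n := by
  have hLa : ContinuousOn (fun z => L (z - a)) {a}ᶜ := by
    apply hL.comp (by fun_prop)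
    intro z hz; exact sub_ne_zero.2 hz
  have hsq : ∀ k : ℤ, ∀ c : ℂ, EvenAt (fun z => (z - a) ^ (2 * k) * Complex.exp (c * L (z - a))) a := by
    intro k c
    refine ⟨Set.univ, Filter.univ_mem, fun z => (z - a) ^ k * Complex.exp (c / 2 * L (z - a)), ?_, ?_⟩
    · have e : (Set.univ \ {a} : Set ℂ) = {a}ᶜ := by ext; simp
      rw [e]
      apply ContinuousOn.mul
      · apply ContinuousOn.zpow₀ (by fun_prop)
        intro z hz; left; exact sub_ne_zero.2 hz
      · apply Complex.continuous_exp.comp_continuousOn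
        exact continuousOn_const.mul hLa
    · intro z hz
      simp only
      rw [mul_pow, ← Complex.exp_nat_mul, ← zpow_natCast, ← zpow_mul]
      congr 2
      · push_cast; ring
      · push_cast; ring
  have hnb : closedBall a r ∈ 𝓝 a := closedBall_mem_nhds a hr
  constructor
  · rintro he ⟨k, hk⟩
    apply not_evenAt_sub a
    apply (he.mul (hsq (-k) (-1))).congr
    refine ⟨_, hnb, ?_⟩
    intro z hz hza
    have hz' := sub_ne_zero.2 hza
    rw [h z hza (by simpa [dist_eq_norm] using hz), hk]
    calc (z - a) ^ (2 * k + 1) * Complex.exp (L (z - a)) *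
        ((z - a) ^ (2 * -k) * Complex.exp (-1 * L (z - a))) 
        = ((z - a) ^ (2 * k + 1) * (z - a) ^ (2 * -k)) * 
          (Complex.exp (L (z - a)) * Complex.exp (-1 * L (z - a))) := by ring
      _ = z - a := by
        rw [← zpow_add₀ hz', ← Complex.exp_add]
        have : 2 * k + 1 + 2 * -k = 1 := by ring
        rw [this]; simp
  · intro hn
    rw [Int.not_odd_iff_even] at hn
    obtain ⟨k, hk⟩ := hn
    apply (hsq k 1).congr
    refine ⟨_, hnb, ?_⟩
    intro z hz hza
    rw [h z hza (by simpa [dist_eq_norm] using hz), hk, one_mul, two_mul]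

lemma continuousOn_nhds {u : ℂ → ℂ} {a b : ℂ} (hu : ContinuousOn u {a}ᶜ) (hb : b ≠ a) :
    ∃ W ∈ 𝓝 b, ContinuousOn u W := ⟨{a}ᶜ, isOpen_compl_singleton.mem_nhds hb, hu⟩

/-- removing one zero -/
lemma remove_zero {f : ℂ → ℂ} (hf : Continuous f) {a : ℂ} {r : ℝ} (hr : 0 < r)
    (h0 : ∀ z, z ≠ a → ‖z - a‖ ≤ r → f z ≠ 0) :
    ∃ (n : ℤ) (g : ℂ → ℂ), Continuous g ∧ g a ≠ 0 ∧ (∀ z, z ≠ a → (g z = 0 ↔ f z = 0)) ∧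
      (∀ z, r ≤ ‖z - a‖ → f z = (z - a) ^ n * g z) ∧ (EvenAt f a ↔ ¬ Odd n) ∧
      (∀ z, z ≠ a → (EvenAt f z ↔ EvenAt g z)) := by
  obtain ⟨n, L, hL, h⟩ := local_polar hf hr h0
  have hLa : ContinuousOn (fun z => L (z - a)) {a}ᶜ := by
    apply hL.comp (by fun_prop)
    intro z hz; exact sub_ne_zero.2 hz
  set χ : ℂ → ℝ := fun z => max 0 (min 1 (2 - 2 * ‖z - a‖ / r)) with hχ
  have hχc : Continuous χ := by fun_prop
  set u : ℂ → ℂ := fun z => (z - a) ^ n * Complex.exp (χ z * L (z - a)) with hu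
  have huc : ContinuousOn u {a}ᶜ := by
    apply ContinuousOn.mul
    · apply ContinuousOn.zpow₀ (by fun_prop)
      intro z hz; left; exact sub_ne_zero.2 hz
    · apply Complex.continuous_exp.comp_continuousOn
      exact ContinuousOn.mul (by fun_prop) hLa
  have hu0 : ∀ z, z ≠ a → u z ≠ 0 := by
    intro z hz
    exact mul_ne_zero (zpow_ne_zero _ (sub_ne_zero.2 hz)) (Complex.exp_ne_zero _)
  have huic : ContinuousOn (fun z => (u z)⁻¹) {a}ᶜ := huc.inv₀ hu0
  set g : ℂ → ℂ := fun z => if z = a then 1 else f z * (u z)⁻¹ with hg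
  have hgz : ∀ z, z ≠ a → g z = f z * (u z)⁻¹ := by intro z hz; simp [hg, hz]
  have hfz : ∀ z, z ≠ a → f z = g z * u z := by
    intro z hz; rw [hgz z hz]; have := hu0 z hz; field_simp
  have hg1 : ∀ z, ‖z - a‖ < r / 2 → g z = 1 := by
    intro z hz
    by_cases hza : z = a
    · simp [hg, hza]
    · have hz' := sub_ne_zero.2 hza
      rw [hgz z hza, h z hza (by linarith)]
      have : χ z = 1 := by
        simp only [hχ]
        rw [min_eq_left, max_eq_right zero_le_one]
        have : 2 * ‖z - a‖ / r ≤ 1 := by rw [div_le_one hr]; linarith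
        linarith
      simp only [hu, this]
      have := zpow_ne_zero n hz'
      have := Complex.exp_ne_zero (L (z - a))
      simp only [Complex.ofReal_one, one_mul]
      field_simp
  refine ⟨n, g, ?_, by simp [hg], ?_, ?_, evenAt_polar_iff hr hL h, ?_⟩
  · rw [continuous_iff_continuousAt]
    intro z
    by_cases hza : z = a
    · have : ContinuousAt (fun _ : ℂ => (1 : ℂ)) z := continuousAt_const
      apply this.congr
      have : ball a (r / 2) ∈ 𝓝 z := by rw [hza]; exact ball_mem_nhds _ (by positivity)
      filter_upwards [this] with y hy
      rw [hg1 y (by simpa [dist_eq_norm] using hy)]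
    · have h1 : ContinuousAt (fun z => f z * (u z)⁻¹) z :=
        hf.continuousAt.mul (huic.continuousAt (isOpen_compl_singleton.mem_nhds hza))
      apply h1.congr
      filter_upwards [isOpen_compl_singleton.mem_nhds hza] with y hy
      rw [hgz y hy]
  · intro z hz
    rw [hgz z hz]; simp [hu0 z hz]
  · intro z hz
    have hza : z ≠ a := by
      rintro rfl; simp at hz; linarith
    rw [hfz z hza]
    have : χ z = 0 := by
      simp only [hχ]
      apply max_eq_left
      apply (min_le_right _ _).trans
      have : 2 ≤ 2 * ‖z - a‖ / r := by rw [le_div_iff₀ hr]; linarith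
      linarith
    simp only [hu, this]
    simp [mul_comm]
  · intro z hz
    have hW : ∃ W ∈ 𝓝 z, ∀ x ∈ W, x ≠ a := ⟨{a}ᶜ, isOpen_compl_singleton.mem_nhds hz, fun x hx => hx⟩
    obtain ⟨W, hW, hWa⟩ := hW
    constructor
    · intro he
      apply (he.mul (evenAt_of_ne_zero (continuousOn_nhds huic hz) (inv_ne_zero (hu0 z hz)))).congr
      exact ⟨W, hW, fun x hx _ => (hgz x (hWa x hx)).symm⟩
    · intro he
      apply (he.mul (evenAt_of_ne_zero (continuousOn_nhds huc hz) (hu0 z hz))).congr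
      exact ⟨W, hW, fun x hx _ => (hfz x (hWa x hx)).symm⟩

lemma sub_zpow_infty (a : ℂ) (n : ℤ) : ∃ R : ℝ, 0 < R ∧ ∃ M : ℂ → ℂ,
    ContinuousOn M {z | R < ‖z‖} ∧ ∀ z, R < ‖z‖ → (z - a) ^ n = z ^ n * Complex.exp (M z) := by
  have key : ∀ z : ℂ, ‖a‖ + 1 < ‖z‖ → z ≠ 0 ∧ 1 - a / z ∈ Complex.slitPlane := by
    intro z hz
    have hz0 : 0 < ‖z‖ := lt_of_le_of_lt (by positivity) hz
    refine ⟨norm_pos_iff.1 hz0, ?_⟩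
    left
    have h1 : ‖a / z‖ < 1 := by rw [norm_div, div_lt_one hz0]; linarith
    have h2 := Complex.re_le_norm (a / z)
    simp only [Complex.sub_re, Complex.one_re]
    linarith
  refine ⟨‖a‖ + 1, by positivity, fun z => n * Complex.log (1 - a / z), ?_, ?_⟩
  · apply ContinuousOn.mul continuousOn_const
    apply ContinuousOn.clog
    · apply ContinuousOn.sub continuousOn_const
      exact ContinuousOn.div continuousOn_const continuousOn_id (fun z hz => (key z hz).1)
    · exact fun z hz => (key z hz).2
  · intro z hz
    obtain ⟨h1, h2⟩ := key z hz
    rw [Complex.exp_int_mul, Complex.exp_log (Complex.slitPlane_ne_zero h2), ← mul_zpow]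
    congr 1
    field_simp

lemma count_odd (Z : Finset ℂ) : ∀ f : ℂ → ℂ, Continuous f → (∀ z, f z = 0 ↔ z ∈ Z) →
    ∃ (N : ℤ) (R : ℝ) (M : ℂ → ℂ), 0 < R ∧ ContinuousOn M {z | R < ‖z‖} ∧
      (∀ z, R < ‖z‖ → f z = z ^ N * Complex.exp (M z)) ∧
      (Odd N ↔ Odd (Set.ncard {z | ¬ EvenAt f z})) := by
  induction Z using Finset.induction_on with
  | empty =>
    intro f hf hZ
    obtain ⟨M, hM, h⟩ := exists_clog hf (fun z hz => by simpa using (hZ z).1 hz)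
    refine ⟨0, 1, M, one_pos, hM.continuousOn, fun z _ => by simp [h], ?_⟩
    have : {z | ¬ EvenAt f z} = ∅ := by
      ext z
      simp only [Set.mem_ofPred_eq, Set.mem_empty_iff_false, iff_false, not_not]
      exact evenAt_of_ne_zero ⟨Set.univ, Filter.univ_mem, hf.continuousOn⟩
        (fun hz => by simpa using (hZ z).1 hz)
    rw [this]; simp
  | insert a Z ha ih =>
    intro f hf hZ
    obtain ⟨r, hr, hrZ⟩ : ∃ r > 0, closedBall a r ⊆ ((Z : Set ℂ))ᶜ := by
      apply Metric.nhds_basis_closedBall.mem_iff.1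
      exact Z.finite_toSet.isClosed.isOpen_compl.mem_nhds (by simpa using ha)
    obtain ⟨n, g, hg, hga, hgz, hfg, hev, hev'⟩ := remove_zero hf hr (a := a) (by
      intro z hza hz h0
      have := (hZ z).1 h0
      rw [Finset.mem_insert] at this
      rcases this with h | h
      · exact hza h
      · exact hrZ (by simpa [dist_eq_norm] using hz) h)
    obtain ⟨N, R, M, hR, hM, hN, hodd⟩ := ih g hg (by
      intro z
      by_cases hz : z = a
      · subst hz; simp [hga, ha]
      · rw [hgz z hz, hZ]; simp [hz])
    obtain ⟨R', hR', M', hM', hN'⟩ := sub_zpow_infty a n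
    refine ⟨N + n, max (max R R') (r + ‖a‖), fun z => M z + M' z, by positivity, ?_, ?_, ?_⟩
    · apply ContinuousOn.add
      · exact hM.mono (by
          intro z hz
          simp only [Set.mem_ofPred_eq] at hz ⊢
          exact lt_of_le_of_lt ((le_max_left _ _).trans (le_max_left _ _)) hz)
      · exact hM'.mono (by
          intro z hz
          simp only [Set.mem_ofPred_eq] at hz ⊢
          exact lt_of_le_of_lt ((le_max_right _ _).trans (le_max_left _ _)) hz)
    · intro z hz
      simp only [max_lt_iff] at hz
      have hz0 : z ≠ 0 := by
        intro h; rw [h] at hz; simp at hz; linarith [hz.1.1]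
      rw [hfg z (by have := norm_sub_norm_le z a; linarith), hN z hz.1.1, hN' z hz.1.2, zpow_add₀ hz0,
        Complex.exp_add]
      ring
    · have hfin : {z | ¬ EvenAt g z}.Finite := by
        apply Z.finite_toSet.subset
        intro z hz
        by_contra hzZ
        apply hz
        apply evenAt_of_ne_zero ⟨Set.univ, Filter.univ_mem, hg.continuousOn⟩
        intro h
        by_cases hza : z = a
        · exact hga (hza ▸ h)
        · have := (hZ z).1 ((hgz z hza).1 h)
          rw [Finset.mem_insert] at this
          exact hzZ (this.resolve_left hza)
      have hae : EvenAt g a := evenAt_of_ne_zero ⟨Set.univ, Filter.univ_mem, hg.continuousOn⟩ hga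
      by_cases hno : Odd n
      · have : {z | ¬ EvenAt f z} = insert a {z | ¬ EvenAt g z} := by
          ext z
          by_cases hza : z = a
          · subst hza; simp [hev, hno]
          · simp [hza, hev' z hza]
        rw [this, Set.ncard_insert_of_notMem (by simp [hae]) hfin, Int.odd_add, Nat.odd_add_one, ← hodd]
        rw [← Int.not_odd_iff_even]; tauto
      · have : {z | ¬ EvenAt f z} = {z | ¬ EvenAt g z} := by
          ext z
          by_cases hza : z = a
          · subst hza; simp [hev, hno, hae]
          · simp [hev' z hza]
        rw [this, Int.odd_add, ← hodd]
        rw [← Int.not_odd_iff_even]; tauto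

lemma zpow_infty_unique {R : ℝ} (hR : 0 < R) {N N' : ℤ} {M M' : ℂ → ℂ}
    (hM : ContinuousOn M {z | R < ‖z‖}) (hM' : ContinuousOn M' {z | R < ‖z‖})
    (h : ∀ z, R < ‖z‖ → z ^ N * Complex.exp (M z) = z ^ N' * Complex.exp (M' z)) : N = N' := by
  set P : ℝ → ℂ := fun t => Complex.exp (Real.log (R + 1) + t * Complex.I) with hP
  have hPc : Continuous P := by fun_prop
  have hPm : ∀ t, P t ∈ {z : ℂ | R < ‖z‖} := by
    intro t
    simp only [hP, Set.mem_ofPred_eq, Complex.norm_exp]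
    simp
    rw [Real.exp_log (by linarith)]; linarith
  have key := exp_lift_unique (A := ℝ) 
    (f := fun t => N * (Real.log (R + 1) + t * Complex.I) + M (P t))
    (g := fun t => N' * (Real.log (R + 1) + t * Complex.I) + M' (P t) 
      + (N * Real.log (R + 1) + M (P 0) - N' * Real.log (R + 1) - M' (P 0)))
    (Continuous.add (by fun_prop) (hM.comp_continuous hPc hPm))
    ((Continuous.add (by fun_prop) (hM'.comp_continuous hPc hPm)).add continuous_const) (by
      have h2 : ∀ t, Complex.exp (N * (Real.log (R + 1) + t * Complex.I) + M (P t)) = 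
        Complex.exp (N' * (Real.log (R + 1) + t * Complex.I) + M' (P t)) := by
        intro t
        rw [Complex.exp_add, Complex.exp_add, Complex.exp_int_mul, Complex.exp_int_mul]
        exact h _ (hPm t)
      intro t
      rw [h2, Complex.exp_add (_ + _) (_ - _)]
      have h3 := h2 0
      have : Complex.exp (N * Real.log (R + 1) + M (P 0) - N' * Real.log (R + 1) - M' (P 0)) = 1 := by
        rw [sub_sub, Complex.exp_sub]
        simp only [Complex.ofReal_zero, zero_mul, add_zero] at h3
        rw [h3, div_self (Complex.exp_ne_zero _)]
      rw [this, mul_one]) 0 (by simp)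
  have h1 := key (2 * Real.pi)
  have hp : P (2 * Real.pi) = P 0 := by
    simp only [hP]; push_cast
    rw [Complex.exp_add, Complex.exp_two_pi_mul_I]; simp
  simp only [hp] at h1
  have h4 : ((N : ℂ) - N') * (2 * Real.pi * Complex.I) = 0 := by
    push_cast at h1 ⊢
    linear_combination h1
  have h5 : (2 * Real.pi * Complex.I : ℂ) ≠ 0 := Complex.two_pi_I_ne_zero
  have h6 := (mul_eq_zero.1 h4).resolve_right h5
  have : (N : ℂ) = N' := sub_eq_zero.1 h6
  exact_mod_cast this

lemma parity_plane {f g : ℂ → ℂ} (hf : Continuous f) (hg : Continuous g)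
    (hfz : {z | f z = 0}.Finite) (hgz : {z | g z = 0}.Finite) {R : ℝ}
    (h : ∀ z, R < ‖z‖ → f z = g z) :
    Odd (Set.ncard {z | ¬ EvenAt f z}) ↔ Odd (Set.ncard {z | ¬ EvenAt g z}) := by
  obtain ⟨N, R1, M, hR1, hM, h1, ho⟩ := count_odd hfz.toFinset f hf (by simp)
  obtain ⟨N', R2, M', hR2, hM', h1', ho'⟩ := count_odd hgz.toFinset g hg (by simp)
  have : N = N' := by
    apply zpow_infty_unique (R := max (max R1 R2) R) (M := M) (M' := M') (by positivity)
    · exact hM.mono (by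
          intro z hz
          simp only [Set.mem_ofPred_eq] at hz ⊢
          exact lt_of_le_of_lt ((le_max_left _ _).trans (le_max_left _ _)) hz)
    · exact hM'.mono (by
          intro z hz
          simp only [Set.mem_ofPred_eq] at hz ⊢
          exact lt_of_le_of_lt ((le_max_right _ _).trans (le_max_left _ _)) hz)
    · intro z hz
      simp only [max_lt_iff] at hz
      rw [← h1 z hz.1.1, ← h1' z hz.1.2, h z hz.2]
  rw [← ho, ← ho', this]


lemma exists_periodic_poly {v : ℝ → ℝ} (hv : Continuous v) (hper : v Real.pi = v (-Real.pi))
    {ε : ℝ} (hε : 0 < ε) : ∃ w : Polynomial ℝ, w ≠ 0 ∧ w.eval Real.pi = w.eval (-Real.pi) ∧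
      ∀ t ∈ Set.Icc (-Real.pi) Real.pi, |w.eval t - v t| < ε := by
  obtain ⟨p, hp⟩ := exists_polynomial_near_of_continuousOn (-Real.pi) Real.pi v hv.continuousOn
    (ε / 4) (by positivity)
  have hpi := Real.pi_pos
  set k : ℝ := (p.eval Real.pi - p.eval (-Real.pi)) / (2 * Real.pi) with hk
  set p1 : Polynomial ℝ := p - Polynomial.C k * Polynomial.X with hp1
  have hk2 : k * (2 * Real.pi) = p.eval Real.pi - p.eval (-Real.pi) := by
    rw [hk]; field_simp
  have h1 := hp Real.pi ⟨by linarith, le_refl _⟩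
  have h2 := hp (-Real.pi) ⟨le_refl _, by linarith⟩
  rw [abs_lt] at h1 h2
  have hkb : |k| * Real.pi < ε / 4 := by
    have : |k * (2 * Real.pi)| < ε / 2 := by
      rw [hk2, abs_lt]; constructor <;> linarith
    rw [abs_mul, abs_of_pos (by positivity : (0 : ℝ) < 2 * Real.pi)] at this
    linarith
  have hp1b : ∀ t ∈ Set.Icc (-Real.pi) Real.pi, |p1.eval t - v t| < ε / 2 := by
    intro t ht
    have h3 := hp t ht
    have h4 : |k * t| < ε / 4 := by
      rw [abs_mul]
      refine lt_of_le_of_lt ?_ hkb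
      gcongr
      exact abs_le.2 ht
    simp only [hp1, Polynomial.eval_sub, Polynomial.eval_mul, Polynomial.eval_C, Polynomial.eval_X]
    rw [abs_lt] at h3 h4 ⊢
    constructor <;> linarith
  have hp1p : p1.eval Real.pi = p1.eval (-Real.pi) := by
    simp only [hp1, Polynomial.eval_sub, Polynomial.eval_mul, Polynomial.eval_C, Polynomial.eval_X]
    linarith
  by_cases h0 : p1 = 0
  · refine ⟨Polynomial.C (ε / 4), by simpa using hε.ne', by simp, ?_⟩
    intro t ht
    have := hp1b t ht
    rw [h0] at this
    simp only [Polynomial.eval_C, Polynomial.eval_zero] at this ⊢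
    rw [abs_lt] at this ⊢
    constructor <;> linarith
  · exact ⟨p1, h0, hp1p, fun t ht => (hp1b t ht).trans (by linarith)⟩

lemma continuousOn_periodic_arg {w : ℝ → ℝ} (hw : Continuous w)
    (hper : w Real.pi = w (-Real.pi)) : ContinuousOn (fun z : ℂ => w z.arg) {0}ᶜ := by
  intro z hz
  apply ContinuousAt.continuousWithinAt
  by_cases hs : z ∈ Complex.slitPlane
  · exact hw.continuousAt.comp (Complex.continuousAt_arg hs)
  · rw [Complex.mem_slitPlane_iff, not_or, not_lt, not_not] at hs
    have hre : z.re < 0 := by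
      apply lt_of_le_of_ne hs.1
      intro h
      exact hz (Complex.ext h hs.2)
    have h1 := Complex.continuousWithinAt_arg_of_re_neg_of_im_zero hre hs.2
    have h2 := Complex.tendsto_arg_nhdsWithin_im_neg_of_re_neg_of_im_zero hre hs.2
    have hz' : z.arg = Real.pi := Complex.arg_eq_pi_iff.2 ⟨hre, hs.2⟩
    have h1' : Filter.Tendsto (fun z : ℂ => w z.arg) (𝓝[{z : ℂ | 0 ≤ z.im}] z) (𝓝 (w Real.pi)) := by
      have := (hw.tendsto z.arg).comp h1.tendsto
      rw [hz'] at this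
      exact this
    have h2' : Filter.Tendsto (fun z : ℂ => w z.arg) (𝓝[{z : ℂ | z.im < 0}] z) (𝓝 (w Real.pi)) := by
      rw [hper]
      exact (hw.tendsto _).comp h2
    have h3 := h1'.sup h2'
    rw [← nhdsWithin_union] at h3
    have : {z : ℂ | 0 ≤ z.im} ∪ {z : ℂ | z.im < 0} = Set.univ := by
      ext y
      simp [le_or_gt]
    rw [this, nhdsWithin_univ] at h3
    rw [ContinuousAt, hz']
    exact h3

lemma circle_approx {f : ℂ → ℂ} (hf : Continuous f) {r : ℝ} (hr : 0 < r) {ε : ℝ} (hε : 0 < ε) :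
    ∃ q : ℂ → ℂ, ContinuousOn q {0}ᶜ ∧ (∀ z : ℂ, ∀ t : ℝ, 0 < t → q (t * z) = q z) ∧
      (∀ z : ℂ, ‖z‖ = r → ‖q z - f z‖ < ε) ∧ {z : ℂ | ‖z‖ = r ∧ (q z).im = 0}.Finite := by
  obtain ⟨w, hw0, hwp, hw⟩ := exists_periodic_poly 
    (v := fun t => (f (r * Complex.exp (t * Complex.I))).im) 
    (by have : Continuous (fun t : ℝ => f (r * Complex.exp (t * Complex.I))) := by fun_prop
        exact Complex.continuous_im.comp this) (by
      push_cast
      rw [neg_mul, Complex.exp_neg, Complex.exp_pi_mul_I]; norm_num) hε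
  have hnorm : ∀ z : ℂ, ‖z‖ = r → z = r * Complex.exp (z.arg * Complex.I) := by
    intro z hz
    rw [← hz, Complex.norm_mul_exp_arg_mul_I]
  refine ⟨fun z => ((f ((r / ‖z‖ : ℝ) * z)).re : ℂ) + (w.eval z.arg : ℝ) * Complex.I, ?_, ?_, ?_, ?_⟩
  · apply ContinuousOn.add
    · have : ContinuousOn (fun z : ℂ => f ((r / ‖z‖ : ℝ) * z)) {0}ᶜ := by
        apply hf.comp_continuousOn
        apply ContinuousOn.mul _ continuousOn_id
        apply Complex.continuous_ofReal.comp_continuousOn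
        apply ContinuousOn.div continuousOn_const continuous_norm.continuousOn
        intro z hz; simpa using hz
      exact (Complex.continuous_ofReal.comp Complex.continuous_re).comp_continuousOn this
    · apply ContinuousOn.mul _ continuousOn_const
      apply Complex.continuous_ofReal.comp_continuousOn
      exact continuousOn_periodic_arg (w := fun t => w.eval t) w.continuous hwp
  · intro z t ht
    simp only
    rw [Complex.arg_real_mul z ht]
    congr 4
    rw [norm_mul, Complex.norm_real, Real.norm_of_nonneg ht.le]
    have : (t : ℂ) ≠ 0 := by exact_mod_cast ht.ne'
    by_cases hz : z = 0
    · simp [hz]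
    · have : (‖z‖ : ℂ) ≠ 0 := by exact_mod_cast (norm_pos_iff.2 hz).ne'
      push_cast
      field_simp
  · intro z hz
    simp only
    rw [hz, div_self hr.ne']
    simp only [Complex.ofReal_one, one_mul]
    have h1 := hw z.arg ⟨(Complex.neg_pi_lt_arg z).le, Complex.arg_le_pi z⟩
    rw [← hnorm z hz] at h1
    have : ((f z).re : ℂ) + (w.eval z.arg : ℝ) * Complex.I - f z = 
        ((w.eval z.arg - (f z).im : ℝ) : ℂ) * Complex.I := by
      push_cast
      linear_combination Complex.re_add_im (f z)
    rw [this, norm_mul, Complex.norm_I, mul_one, Complex.norm_real]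
    exact h1
  · apply ((w.roots.toFinset.finite_toSet).image 
      (fun t : ℝ => (r : ℂ) * Complex.exp (t * Complex.I))).subset
    rintro z ⟨hz, hz2⟩
    refine ⟨z.arg, ?_, (hnorm z hz).symm⟩
    simp only [Complex.add_im, Complex.ofReal_im, Complex.mul_im, Complex.ofReal_re, Complex.I_im,
      Complex.I_re] at hz2
    simp [hw0, Polynomial.IsRoot]
    linarith

lemma pos_lower {K : Set ℂ} (hK : IsCompact K) {f : ℂ → ℝ} (hf : Continuous f)
    (h : ∀ z ∈ K, 0 < f z) : ∃ ε : ℝ, 0 < ε ∧ ∀ z ∈ K, ε ≤ f z := by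
  obtain ⟨ε, h1, h2⟩ := hK.exists_forall_le' hf.continuousOn h
  exact ⟨ε, h1, h2⟩

lemma step_plane {f : ℂ → ℂ} (hf : Continuous f) (hfz : {z | f z = 0}.Finite) {K : Set ℂ}
    (hK : IsClosed K) (hfK : ∀ z ∈ K, 0 < (f z).re) :
    ∃ (g : ℂ → ℂ) (R : ℝ), Continuous g ∧ {z | g z = 0}.Finite ∧ (∀ z, R < ‖z‖ → g z = f z) ∧
      (∀ z ∈ K, 0 < (g z).re) ∧ (∀ z, ‖z‖ ≤ 1 → 0 < (g z).re) := by
  obtain ⟨r, hr3, hrz⟩ : ∃ r : ℝ, 3 ≤ r ∧ ∀ z, r - 1 ≤ ‖z‖ → f z ≠ 0 := by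
    obtain ⟨C, hC⟩ := hfz.isBounded.exists_norm_le
    refine ⟨max 3 (C + 2), le_max_left _ _, fun z hz h0 => ?_⟩
    have := hC z h0
    have := le_max_right 3 (C + 2)
    linarith
  have hAc : IsCompact (closedBall (0 : ℂ) (r + 1) ∩ {z | r - 1 ≤ ‖z‖}) :=
    (isCompact_closedBall 0 (r + 1)).inter_right (isClosed_le continuous_const continuous_norm)
  obtain ⟨ε1, hε1, hb1⟩ := pos_lower hAc hf.norm (fun z hz => norm_pos_iff.2 (hrz z hz.2))
  obtain ⟨ε2, hε2, hb2⟩ := pos_lower ((isCompact_closedBall (0 : ℂ) (r + 1)).inter_right hK)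
    (Complex.continuous_re.comp hf) (fun z hz => hfK z hz.2)
  obtain ⟨ε, hε, he1, he2⟩ : ∃ ε : ℝ, 0 < ε ∧ 4 * ε ≤ ε1 ∧ 4 * ε ≤ ε2 :=
    ⟨min ε1 ε2 / 4, by positivity, by linarith [min_le_left ε1 ε2], by linarith [min_le_right ε1 ε2]⟩
  have huc := (isCompact_closedBall (0 : ℂ) (r + 1)).uniformContinuousOn_of_continuous hf.continuousOn
  rw [Metric.uniformContinuousOn_iff] at huc
  obtain ⟨δ0, hδ0, huc⟩ := huc ε hε
  obtain ⟨δ, hδ, hδ1, hδ2⟩ : ∃ δ : ℝ, 0 < δ ∧ δ ≤ 1 ∧ δ < δ0 :=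
    ⟨min 1 (δ0 / 2), by positivity, min_le_left _ _, by
      linarith [min_le_right 1 (δ0 / 2)]⟩
  obtain ⟨q, hqc, hqh, hqf, hqz⟩ := circle_approx hf (by linarith : 0 < r) hε
  -- closeness on the annulus
  have hclose : ∀ z, r - δ ≤ ‖z‖ → ‖z‖ ≤ r + δ → ‖q z - f z‖ < 2 * ε := by
    intro z h1 h2
    have hz0 : 0 < ‖z‖ := by linarith
    set y : ℂ := ((r / ‖z‖ : ℝ) : ℂ) * z with hy
    have hyn : ‖y‖ = r := by
      rw [hy, norm_mul, Complex.norm_real, Real.norm_of_nonneg (by positivity)]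
      field_simp
    have hyz : dist y z < δ0 := by
      have : y - z = ((r / ‖z‖ - 1 : ℝ) : ℂ) * z := by rw [hy]; push_cast; ring
      rw [dist_eq_norm, this, norm_mul, Complex.norm_real, Real.norm_eq_abs]
      have h3 : |r / ‖z‖ - 1| * ‖z‖ = |r - ‖z‖| := by
        rw [← abs_of_pos hz0, ← abs_mul, abs_of_pos hz0]
        congr 1; field_simp
      rw [h3]
      refine lt_of_le_of_lt ?_ hδ2
      rw [abs_le]; constructor <;> linarith
    have h4 := huc y (by simp [hyn]) z (by simp; linarith) hyz
    have h5 := hqf y hyn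
    have h6 : q y = q z := hqh z _ (by positivity)
    rw [h6] at h5
    rw [dist_eq_norm] at h4
    calc ‖q z - f z‖ = ‖(q z - f y) + (f y - f z)‖ := by congr 1; ring
      _ ≤ ‖q z - f y‖ + ‖f y - f z‖ := norm_add_le _ _
      _ < 2 * ε := by linarith
  set s : ℂ → ℝ := fun z => max 0 (min 1 ((r - ‖z‖) / δ)) with hs
  set c : ℂ → ℝ := fun z => max 0 (min 1 ((r + δ - ‖z‖) / δ)) with hc
  have hsc : Continuous s := by fun_prop
  have hcc : Continuous c := by fun_prop
  have hs01 : ∀ z, 0 ≤ s z ∧ s z ≤ 1 := fun z => ⟨le_max_left _ _, max_le zero_le_one (min_le_left _ _)⟩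
  have hc01 : ∀ z, 0 ≤ c z ∧ c z ≤ 1 := fun z => ⟨le_max_left _ _, max_le zero_le_one (min_le_left _ _)⟩
  have hs1 : ∀ z, ‖z‖ ≤ r - δ → s z = 1 := by
    intro z hz
    have : 1 ≤ (r - ‖z‖) / δ := by rw [le_div_iff₀ hδ]; linarith
    simp only [hs]; rw [min_eq_left this, max_eq_right zero_le_one]
  have hs0 : ∀ z, r ≤ ‖z‖ → s z = 0 := by
    intro z hz
    have : (r - ‖z‖) / δ ≤ 0 := div_nonpos_of_nonpos_of_nonneg (by linarith) hδ.le
    simp only [hs]; exact max_eq_left ((min_le_right _ _).trans this)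
  have hc1 : ∀ z, ‖z‖ ≤ r → c z = 1 := by
    intro z hz
    have : 1 ≤ (r + δ - ‖z‖) / δ := by rw [le_div_iff₀ hδ]; linarith
    simp only [hc]; rw [min_eq_left this, max_eq_right zero_le_one]
  have hc0 : ∀ z, r + δ ≤ ‖z‖ → c z = 0 := by
    intro z hz
    have : (r + δ - ‖z‖) / δ ≤ 0 := div_nonpos_of_nonpos_of_nonneg (by linarith) hδ.le
    simp only [hc]; exact max_eq_left ((min_le_right _ _).trans this)
  set g : ℂ → ℂ := fun z => (1 - s z : ℝ) * ((1 - c z : ℝ) * f z + (c z : ℝ) * q z) + (s z : ℝ) with hg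
  have hgin : ∀ z, ‖z‖ ≤ r - δ → g z = 1 := by
    intro z hz; simp [hg, hs1 z hz]
  have hgout : ∀ z, r + δ ≤ ‖z‖ → g z = f z := by
    intro z hz; simp [hg, hs0 z (by linarith), hc0 z hz]
  refine ⟨g, r + δ, ?_, ?_, fun z hz => hgout z hz.le, ?_, ?_⟩
  · rw [continuous_iff_continuousAt]
    intro z
    by_cases hz : z = 0
    · have : ContinuousAt (fun _ : ℂ => (1 : ℂ)) z := continuousAt_const
      apply this.congr
      have : ball (0 : ℂ) 1 ∈ 𝓝 z := by rw [hz]; exact ball_mem_nhds _ one_pos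
      filter_upwards [this] with y hy
      rw [hgin y (by have : ‖y‖ < 1 := by simpa using hy
                     linarith)]
    · have hq : ContinuousAt q z := hqc.continuousAt (isOpen_compl_singleton.mem_nhds hz)
      have := hf.continuousAt (x := z)
      have := hsc.continuousAt (x := z)
      have := hcc.continuousAt (x := z)
      simp only [hg]
      fun_prop
  · apply (hqz.image (fun u => (((r - δ * (-(q u).re / (1 - (q u).re))) / r : ℝ) : ℂ) * u)).subset
    intro z hz
    have hz : g z = 0 := hz
    rcases le_or_gt (r + δ) ‖z‖ with h1 | h1
    · exact absurd (hgout z h1 ▸ hz) (hrz z (by linarith))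
    rcases le_or_gt r ‖z‖ with h2 | h2
    · exfalso
      have h3 := hclose z (by linarith) h1.le
      have h4 : 4 * ε ≤ ‖f z‖ := he1.trans (hb1 z ⟨by simp; linarith, by
        simp only [Set.mem_ofPred_eq]; linarith⟩)
      have h5 : f z = -((c z : ℝ) * (q z - f z)) := by
        simp only [hg, hs0 z h2] at hz
        push_cast at hz
        linear_combination hz
      rw [h5, norm_neg, norm_mul, Complex.norm_real, Real.norm_of_nonneg (hc01 z).1] at h4
      have : c z * ‖q z - f z‖ ≤ 1 * ‖q z - f z‖ := by gcongr; exact (hc01 z).2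
      linarith
    rcases le_or_gt ‖z‖ (r - δ) with h3 | h3
    · rw [hgin z h3] at hz; simp at hz
    have hz0 : 0 < ‖z‖ := by linarith
    have hsz : s z = (r - ‖z‖) / δ := by
      have a1 : (r - ‖z‖) / δ ≤ 1 := by rw [div_le_one hδ]; linarith
      have a2 : 0 ≤ (r - ‖z‖) / δ := div_nonneg (by linarith) hδ.le
      simp only [hs]; rw [min_eq_right a1, max_eq_right a2]
    have hsz1 : s z < 1 := by rw [hsz, div_lt_one hδ]; linarith
    have hz' : ((1 - s z : ℝ) : ℂ) * q z + (s z : ℝ) = 0 := by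
      simp only [hg, hc1 z h2.le] at hz
      simpa using hz
    have him : (q z).im = 0 := by
      have := congrArg Complex.im hz'
      simp only [Complex.add_im, Complex.mul_im, Complex.ofReal_re, Complex.ofReal_im,
        zero_mul, add_zero, Complex.zero_im] at this
      exact (mul_eq_zero.1 this).resolve_left (by linarith)
    have hre : (1 - s z) * (q z).re + s z = 0 := by
      have := congrArg Complex.re hz'
      simpa using this
    have hq1 : 1 - (q z).re ≠ 0 := by
      intro h
      have : (q z).re = 1 := by linarith
      rw [this] at hre; linarith
    have hsq : -(q z).re / (1 - (q z).re) = s z := by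
      rw [div_eq_iff hq1]; linarith
    have hqu : q (((r / ‖z‖ : ℝ) : ℂ) * z) = q z := hqh z _ (by have : 0 < r := by linarith
                                                                positivity)
    refine ⟨((r / ‖z‖ : ℝ) : ℂ) * z, ⟨?_, by rw [hqu]; exact him⟩, ?_⟩
    · rw [norm_mul, Complex.norm_real, Real.norm_of_nonneg (div_nonneg (by linarith) hz0.le)]
      field_simp
    · simp only
      rw [hqu, hsq, hsz, ← mul_assoc, ← Complex.ofReal_mul]
      have : (r - δ * ((r - ‖z‖) / δ)) / r * (r / ‖z‖) = 1 := by
        have : r ≠ 0 := by linarith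
        field_simp
        ring
      rw [this]; simp
  · intro z hz
    rcases le_or_gt (r + δ) ‖z‖ with h1 | h1
    · rw [hgout z h1]; exact hfK z hz
    rcases le_or_gt ‖z‖ (r - δ) with h3 | h3
    · rw [hgin z h3]; simp
    have h4 := hclose z h3.le h1.le
    have h5 : 4 * ε ≤ (f z).re := he2.trans (hb2 z ⟨by simp; linarith, hz⟩)
    have h6 : 0 < (q z).re := by
      have := Complex.abs_re_le_norm (q z - f z)
      have := neg_abs_le (q z - f z).re
      simp only [Complex.sub_re] at *
      linarith
    have h7 : (g z).re = (1 - s z) * ((1 - c z) * (f z).re + c z * (q z).re) + s z := by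
      simp [hg]
    rw [h7]
    obtain ⟨a1, a2⟩ := hs01 z
    obtain ⟨b1, b2⟩ := hc01 z
    have hX : 0 < (1 - c z) * (f z).re + c z * (q z).re := by
      rcases eq_or_lt_of_le b1 with hb | hb
      · rw [← hb]; simp; linarith
      · have : 0 ≤ (1 - c z) * (f z).re := mul_nonneg (by linarith) (by linarith)
        positivity
    rcases eq_or_lt_of_le a1 with ha | ha
    · rw [← ha]; simpa using hX
    · have : 0 ≤ (1 - s z) * ((1 - c z) * (f z).re + c z * (q z).re) := mul_nonneg (by linarith) hX.le
      linarith
  · intro z hz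
    rw [hgin z (by linarith)]; simp


lemma evenAt_comp_iff [TopologicalSpace X] {ι : ℂ → X} (hι : IsOpenEmbedding ι) (f : X → ℂ) (a : ℂ) :
    EvenAt f (ι a) ↔ EvenAt (fun z => f (ι z)) a := by
  constructor
  · rintro ⟨V, hV, s, hs, h⟩
    refine ⟨ι ⁻¹' V, hι.continuous.continuousAt hV, fun z => s (ι z), ?_, ?_⟩
    · apply hs.comp hι.continuous.continuousOn
      intro z hz
      exact ⟨hz.1, fun hh => hz.2 (hι.injective hh)⟩
    · intro z hz
      exact h _ ⟨hz.1, fun hh => hz.2 (hι.injective hh)⟩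
  · rintro ⟨V, hV, s, hs, h⟩
    obtain ⟨W, hWV, hWo, haW⟩ := _root_.mem_nhds_iff.1 hV
    have hext : ∀ z, Function.extend ι s 0 (ι z) = s z := fun z => hι.injective.extend_apply s 0 z
    have hopen : IsOpen (W \ {a}) := hWo.sdiff isClosed_singleton
    refine ⟨ι '' W, hι.isOpenMap.image_mem_nhds (hWo.mem_nhds haW), Function.extend ι s 0, ?_, ?_⟩
    · rintro _ ⟨⟨z, hz, rfl⟩, hza⟩
      apply ContinuousAt.continuousWithinAt
      rw [← hι.continuousAt_iff]
      have hzm : z ∈ W \ {a} := ⟨hz, fun hh => hza (by rw [hh]; rfl)⟩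
      have : Function.extend ι s 0 ∘ ι = s := funext hext
      rw [this]
      exact (hs.mono (by intro y hy; exact ⟨hWV hy.1, hy.2⟩)).continuousAt (hopen.mem_nhds hzm)
    · rintro _ ⟨⟨z, hz, rfl⟩, hza⟩
      rw [hext]
      exact h z ⟨hWV hz, fun hh => hza (by rw [hh]; rfl)⟩

lemma glue_continuous [TopologicalSpace X] [T2Space X] {Y : Type*} [TopologicalSpace Y]
    {ι : ℂ → X} (hι : IsOpenEmbedding ι)
    {f : X → Y} {g : ℂ → Y} (hf : Continuous f) (hg : Continuous g) {R : ℝ}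
    (h : ∀ z, R < ‖z‖ → g z = f (ι z)) :
    Continuous (Function.extend ι g f) ∧ 
      (∀ x ∉ Set.range ι, ∃ W ∈ 𝓝 x, ∀ y ∈ W, f y = Function.extend ι g f y) := by
  have hext : ∀ z, Function.extend ι g f (ι z) = g z := fun z => hι.injective.extend_apply g f z
  have hloc : ∀ x ∉ Set.range ι, ∃ W ∈ 𝓝 x, ∀ y ∈ W, f y = Function.extend ι g f y := by
    intro x hx
    have hcl : IsClosed (ι '' closedBall 0 R) :=
      ((isCompact_closedBall 0 R).image hι.continuous).isClosed
    refine ⟨(ι '' closedBall 0 R)ᶜ, hcl.isOpen_compl.mem_nhds ?_, ?_⟩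
    · rintro ⟨z, -, rfl⟩; exact hx ⟨z, rfl⟩
    · intro y hy
      by_cases hyr : y ∈ Set.range ι
      · obtain ⟨z, rfl⟩ := hyr
        rw [hext, h]
        by_contra hz
        exact hy ⟨z, by simpa using hz, rfl⟩
      · rw [Function.extend_apply' _ _ _ (by simpa using hyr)]
  refine ⟨?_, hloc⟩
  rw [continuous_iff_continuousAt]
  intro x
  by_cases hx : x ∈ Set.range ι
  · obtain ⟨z, rfl⟩ := hx
    rw [← hι.continuousAt_iff]
    have : Function.extend ι g f ∘ ι = g := funext hext
    rw [this]; exact hg.continuousAt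
  · obtain ⟨W, hW, hWe⟩ := hloc x hx
    apply (hf.continuousAt (x := x)).congr
    filter_upwards [hW] with y hy using hWe y hy

lemma oddSet_subset [TopologicalSpace X] {f : X → ℂ} (hf : Continuous f) :
    {x | ¬ EvenAt f x} ⊆ {x | f x = 0} := by
  intro x hx
  by_contra h
  exact hx (evenAt_of_ne_zero ⟨Set.univ, Filter.univ_mem, hf.continuousOn⟩ h)

lemma oddSet_ncard [TopologicalSpace X] {ι : ℂ → X} (hι : IsOpenEmbedding ι) {f : X → ℂ}
    (hf : Continuous f) (hfz : {x | f x = 0}.Finite) :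
    Set.ncard {x | ¬ EvenAt f x} = Set.ncard {z | ¬ EvenAt (fun z => f (ι z)) z} +
      Set.ncard {x | ¬ EvenAt f x ∧ x ∉ Set.range ι} := by
  have hfin : {x | ¬ EvenAt f x}.Finite := hfz.subset (oddSet_subset hf)
  have : {x | ¬ EvenAt f x} = ι '' {z | ¬ EvenAt (fun z => f (ι z)) z} ∪ 
      {x | ¬ EvenAt f x ∧ x ∉ Set.range ι} := by
    ext x
    by_cases hx : x ∈ Set.range ι
    · obtain ⟨z, rfl⟩ := hx
      simp [evenAt_comp_iff hι, hι.injective.eq_iff]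
    · have : ∀ z, ι z ≠ x := fun z hz => hx ⟨z, hz⟩
      simp [this]
  rw [← Set.ncard_image_of_injective _ hι.injective]
  conv_lhs => rw [this]
  apply Set.ncard_union_eq
  · rw [Set.disjoint_left]
    rintro _ ⟨z, _, rfl⟩ ⟨_, h⟩
    exact h ⟨z, rfl⟩
  · exact hfin.subset (by rw [this]; exact Set.subset_union_left)
  · exact hfin.subset (by rw [this]; exact Set.subset_union_right)

lemma step_surface [TopologicalSpace X] [T2Space X] {ι : ℂ → X} (hι : IsOpenEmbedding ι)
    {f : X → ℂ} (hf : Continuous f) (hfz : {x | f x = 0}.Finite) {K : Set X}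
    (hK : IsClosed K) (hfK : ∀ x ∈ K, 0 < (f x).re) :
    ∃ g : X → ℂ, Continuous g ∧ {x | g x = 0}.Finite ∧
      (∀ x ∈ K ∪ ι '' closedBall 0 1, 0 < (g x).re) ∧
      (Odd (Set.ncard {x | ¬ EvenAt f x}) ↔ Odd (Set.ncard {x | ¬ EvenAt g x})) := by
  have hfz' : {z | f (ι z) = 0}.Finite := hfz.preimage hι.injective.injOn
  obtain ⟨g0, R, hg0, hg0z, hg0R, hg0K, hg0B⟩ := step_plane (f := fun z => f (ι z))
    (hf.comp hι.continuous) hfz' (hK.preimage hι.continuous) (fun z hz => hfK _ hz)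
  obtain ⟨hgc, hloc⟩ := glue_continuous hι hf hg0 hg0R
  set g := Function.extend ι g0 f with hg
  have hext : ∀ z, g (ι z) = g0 z := fun z => hι.injective.extend_apply g0 f z
  have hgz : {x | g x = 0}.Finite := by
    apply (hfz.union (hg0z.image ι)).subset
    intro x hx
    by_cases hxr : x ∈ Set.range ι
    · obtain ⟨z, rfl⟩ := hxr
      right
      exact ⟨z, by simpa [hext] using hx, rfl⟩
    · left
      obtain ⟨W, hW, hWe⟩ := hloc x hxr
      have := hWe x (mem_of_mem_nhds hW)
      simp only [Set.mem_ofPred_eq] at hx ⊢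
      rw [this, hx]
  refine ⟨g, hgc, hgz, ?_, ?_⟩
  · rintro x (hx | ⟨z, hz, rfl⟩)
    · by_cases hxr : x ∈ Set.range ι
      · obtain ⟨z, rfl⟩ := hxr
        rw [hext]; exact hg0K z hx
      · obtain ⟨W, hW, hWe⟩ := hloc x hxr
        rw [← hWe x (mem_of_mem_nhds hW)]
        exact hfK x hx
    · rw [hext]; exact hg0B z (by simpa using hz)
  · rw [oddSet_ncard hι hf hfz, oddSet_ncard hι hgc hgz]
    have e1 : {x | ¬ EvenAt f x ∧ x ∉ Set.range ι} = {x | ¬ EvenAt g x ∧ x ∉ Set.range ι} := by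
      ext x
      simp only [Set.mem_ofPred_eq]
      apply and_congr_left
      intro hx
      obtain ⟨W, hW, hWe⟩ := hloc x hx
      rw [not_iff_not]
      constructor
      · intro h; exact h.congr ⟨W, hW, fun y hy _ => hWe y hy⟩
      · intro h; exact h.congr ⟨W, hW, fun y hy _ => (hWe y hy).symm⟩
    have e2 : (fun z => g (ι z)) = g0 := funext hext
    rw [e1, e2]
    have e3 := parity_plane (hf.comp hι.continuous) hg0 hfz' hg0z (R := R)
      (fun z hz => (hg0R z hz).symm)
    simp only [Function.comp_def] at e3
    rw [Nat.odd_add, Nat.odd_add, e3]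

lemma no_odd [TopologicalSpace X] [T2Space X] [CompactSpace X]
    (hch : ∀ x : X, ∃ ι : ℂ → X, IsOpenEmbedding ι ∧ ι 0 = x)
    {f : X → ℂ} (hf : Continuous f) (hfz : {x | f x = 0}.Finite) :
    ¬ Odd (Set.ncard {x | ¬ EvenAt f x}) := by
  intro hodd
  choose ι hι hι0 using hch
  obtain ⟨t, ht⟩ := isCompact_univ.elim_nhds_subcover (fun x => ι x '' closedBall 0 1) (by
    intro x _
    have := (hι x).isOpenMap.image_mem_nhds (closedBall_mem_nhds (0 : ℂ) one_pos)
    rwa [hι0] at this)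
  have key : ∀ t : Finset X, ∃ g : X → ℂ, Continuous g ∧ {x | g x = 0}.Finite ∧
      (∀ x ∈ ⋃ y ∈ t, ι y '' closedBall 0 1, 0 < (g x).re) ∧ Odd (Set.ncard {x | ¬ EvenAt g x}) := by
    intro t
    induction t using Finset.induction_on with
    | empty => exact ⟨f, hf, hfz, by simp, hodd⟩
    | insert a t ha ih =>
      obtain ⟨g, hg, hgz, hgK, hgo⟩ := ih
      have hcl : IsClosed (⋃ y ∈ t, ι y '' closedBall (0 : ℂ) 1) := by
        apply t.finite_toSet.isClosed_biUnion
        intro y _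
        exact ((isCompact_closedBall 0 1).image (hι y).continuous).isClosed
      obtain ⟨g', hg', hgz', hgK', hiff⟩ := step_surface (hι a) hg hgz hcl hgK
      refine ⟨g', hg', hgz', ?_, hiff.1 hgo⟩
      intro x hx
      apply hgK'
      rw [Finset.set_biUnion_insert] at hx
      rwa [Set.union_comm]
  obtain ⟨g, hg, -, hgK, hgo⟩ := key t
  have : {x | ¬ EvenAt g x} = ∅ := by
    rw [Set.eq_empty_iff_forall_notMem]
    intro x hx
    have h0 : g x = 0 := oddSet_subset hg hx
    have := hgK x (ht.2 (Set.mem_univ x))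
    rw [h0] at this
    simp at this
  rw [this] at hgo
  simp at hgo

lemma exists_chart [TopologicalSpace X] 
    (hman : ∀ x : X, ∃ U : Set X, IsOpen U ∧ x ∈ U ∧ Nonempty (U ≃ₜ (ℝ × ℝ))) (x : X) :
    ∃ ι : ℂ → X, IsOpenEmbedding ι ∧ ι 0 = x := by
  obtain ⟨U, hU, hxU, ⟨e⟩⟩ := hman x
  let φ : ℂ ≃ₜ U := (Complex.equivRealProdCLM.toHomeomorph.trans (Homeomorph.addRight (e ⟨x, hxU⟩))).trans e.symm
  refine ⟨fun z => (φ z : X), hU.isOpenEmbedding_subtypeVal.comp φ.isOpenEmbedding, ?_⟩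
  simp [φ, Prod.mk_zero_zero]


lemma chi_sing {m : ℕ} (p : Fin m → X) (hp : Function.Injective p) (α : Fin m → ℝ) (k : Fin m) :
    chi p α (p k) = 1 + α k := by
  simp [chi, hp.eq_iff]

lemma chi_nonsing {m : ℕ} (p : Fin m → X) (α : Fin m → ℝ) (q : X) (hq : q ∉ Set.range p) :
    chi p α q = 1 := by
  have : ∀ j, p j ≠ q := fun j hj => hq ⟨j, hj⟩
  simp [chi, this]

lemma chi_lower {m : ℕ} (hm : 1 ≤ m) (p : Fin m → X) (hp : Function.Injective p)
    (α : Fin m → ℝ) (hα : ∀ j, -1 < α j ∧ α j < 0) (hmono : Monotone α) (q : X) :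
    1 + α ⟨0, hm⟩ ≤ chi p α q ∧ 0 < chi p α q ∧ chi p α q ≤ 1 := by
  by_cases hq : q ∈ Set.range p
  · obtain ⟨k, rfl⟩ := hq
    rw [chi_sing p hp]
    have h1 : α ⟨0, hm⟩ ≤ α k := hmono (by simp [Fin.le_def])
    have := hα k
    exact ⟨by linarith, by linarith, by linarith⟩
  · rw [chi_nonsing p α q hq]
    have := hα ⟨0, hm⟩
    exact ⟨by linarith, by norm_num, le_rfl⟩

lemma bar_int [MetricSpace X] [CompactSpace X] [MeasurableSpace X] [BorelSpace X]
    {m : ℕ} (hm : 1 ≤ m) (p : Fin m → X) (hp : Function.Injective p)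
    (α : Fin m → ℝ) (hα : ∀ j, -1 < α j ∧ α j < 0) (hmono : Monotone α)
    (ρ : ℝ) (hρhi : ρ < min (8 * Real.pi) (4 * Real.pi * (2 + α ⟨0, hm⟩)))
    (μ : ProbabilityMeasure X) (hμ : μ ∈ Bar p α ρ) :
    ∃ q : X, ∀ g : X → ℂ, Continuous g → (∀ j, g (p j) = g (p ⟨0, hm⟩)) →
      ∫ x, g x ∂(μ : Measure X) = g q := by
  obtain ⟨J, t, ht, hJ, hμ⟩ := hμ
  have hIntg : ∀ g : X → ℂ, ∫ x, g x ∂(μ : Measure X) = ∑ q ∈ J, (t q : ℂ) * g q := by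
    intro g
    rw [hμ, integral_finsetSum_measure]
    · apply Finset.sum_congr rfl
      intro q _
      rw [integral_smul_measure, integral_dirac]
      simp
    · intro q _
      apply Integrable.smul_measure _ (by simp)
      exact integrable_dirac (by simp [enorm_lt_top])
  have htC : ∑ q ∈ J, (t q : ℂ) = 1 := by
    have := congrArg (fun s : ℝ≥0 => ((s : ℝ) : ℂ)) ht
    simpa using this
  by_cases hs : ∀ q ∈ J, q ∈ Set.range p
  · refine ⟨p ⟨0, hm⟩, fun g _ hgp => ?_⟩
    rw [hIntg, ← one_mul (g (p ⟨0, hm⟩)), ← htC, Finset.sum_mul]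
    apply Finset.sum_congr rfl
    intro q hq
    obtain ⟨j, rfl⟩ := hs q hq
    rw [hgp]
  · push Not at hs
    obtain ⟨q, hqJ, hq⟩ := hs
    have hJq : J = {q} := by
      by_contra hne
      obtain ⟨qq, hqqJ, hqq⟩ : ∃ qq ∈ J, qq ≠ q := by
        by_contra hcon
        push Not at hcon
        exact hne (Finset.eq_singleton_iff_unique_mem.2 ⟨hqJ, hcon⟩)
      have hsub : ({q, qq} : Finset X) ⊆ J := by
        intro y hy
        simp only [Finset.mem_insert, Finset.mem_singleton] at hy
        rcases hy with rfl | rfl <;> assumption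
      have h1 : ∑ y ∈ ({q, qq} : Finset X), chi p α y ≤ ∑ y ∈ J, chi p α y :=
        Finset.sum_le_sum_of_subset_of_nonneg hsub
          (fun y _ _ => (chi_lower hm p hp α hα hmono y).2.1.le)
      rw [Finset.sum_pair (Ne.symm hqq), chi_nonsing p α q hq] at h1
      have h2 := (chi_lower hm p hp α hα hmono qq).1
      have h3 := lt_of_lt_of_le hρhi (min_le_right _ _)
      have h4 : 4 * Real.pi * (2 + α ⟨0, hm⟩) ≤ 4 * Real.pi * ∑ y ∈ J, chi p α y :=
        mul_le_mul_of_nonneg_left (by linarith) (by positivity)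
      linarith
    refine ⟨q, fun g _ _ => ?_⟩
    rw [hIntg]
    subst hJq
    simp only [Finset.sum_singleton] at htC ⊢
    rw [htC, one_mul]

lemma dirac_mem_bar [MetricSpace X] [CompactSpace X] [MeasurableSpace X] [BorelSpace X]
    {m : ℕ} (hm : 1 ≤ m) (p : Fin m → X) (hp : Function.Injective p)
    (α : Fin m → ℝ) (hα : ∀ j, -1 < α j ∧ α j < 0) (hmono : Monotone α)
    (ρ : ℝ) (hρlo : 4 * Real.pi < ρ) (x : X) : diracProba x ∈ Bar p α ρ := by
  refine ⟨{x}, fun _ => 1, by simp, ?_, ?_⟩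
  · rw [Finset.sum_singleton]
    have := (chi_lower hm p hp α hα hmono x).2.2
    nlinarith [Real.pi_pos]
  · simp [diracProba]

/-- Continuity of the integral of a continuous function in the weak topology. -/
lemma continuous_int [MetricSpace X] [CompactSpace X] [MeasurableSpace X] [BorelSpace X]
    (g : X → ℂ) (hg : Continuous g) :
    Continuous (fun μ : ProbabilityMeasure X => ∫ x, g x ∂(μ : Measure X)) := by
  rw [continuous_iff_continuousAt]
  intro μ
  have := (ProbabilityMeasure.tendsto_iff_forall_integral_rclike_tendsto ℂ
    (μs := fun ν : ProbabilityMeasure X => ν) (F := 𝓝 μ) (μ := μ)).1 Filter.tendsto_id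
    (BoundedContinuousFunction.mkOfCompact ⟨g, hg⟩)
  exact this

lemma transport_step [TopologicalSpace X] (A B : X → Fin 2 → Fin 2 → ℂ) (hB : Continuous B)
    (hBi : ∀ x i j, ∑ k, B x i k * B x k j = B x i j)
    (hAB : ∀ x i j, ‖A x i j - B x i j‖ ≤ 1 / 4)
    (h : ∃ v : X → Fin 2 → ℂ, Continuous v ∧ (∀ x, v x ≠ 0) ∧
      ∀ x i, ∑ j, A x i j * v x j = v x i) :
    ∃ v : X → Fin 2 → ℂ, Continuous v ∧ (∀ x, v x ≠ 0) ∧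
      ∀ x i, ∑ j, B x i j * v x j = v x i := by
  obtain ⟨v, hv, hv0, hvA⟩ := h
  refine ⟨fun x i => ∑ j, B x i j * v x j, ?_, ?_, ?_⟩
  · have h1 : ∀ i j, Continuous fun x => B x i j := fun i j =>
      (continuous_apply j).comp ((continuous_apply i).comp hB)
    have h2 : ∀ j, Continuous fun x => v x j := fun j => (continuous_apply j).comp hv
    exact continuous_pi fun i => continuous_finsetSum _ fun j _ => (h1 i j).mul (h2 j)
  · intro x hx
    apply hv0 x
    have hx' : ∀ i, ∑ j, B x i j * v x j = 0 := fun i => congrFun hx i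
    have hb : ∀ i, ‖v x i‖ ≤ 1 / 2 * ‖v x‖ := by
      intro i
      have e : v x i = ∑ j, (A x i j - B x i j) * v x j := by
        have : ∑ j, (A x i j - B x i j) * v x j
            = ∑ j, A x i j * v x j - ∑ j, B x i j * v x j := by
          rw [← Finset.sum_sub_distrib]
          exact Finset.sum_congr rfl fun j _ => sub_mul _ _ _
        rw [this, hvA, hx' i, sub_zero]
      rw [e]
      calc ‖∑ j, (A x i j - B x i j) * v x j‖
          ≤ ∑ j : Fin 2, 1 / 4 * ‖v x‖ := by
            apply norm_sum_le_of_le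
            intro j _
            rw [norm_mul]
            exact mul_le_mul (hAB x i j) (norm_le_pi_norm _ _) (norm_nonneg _) (by norm_num)
        _ = 1 / 2 * ‖v x‖ := by rw [Fin.sum_univ_two]; ring
    have hn : ‖v x‖ ≤ 1 / 2 * ‖v x‖ := (pi_norm_le_iff_of_nonneg (by positivity)).2 hb
    have : ‖v x‖ = 0 := le_antisymm (by linarith) (norm_nonneg _)
    exact norm_eq_zero.1 this
  · intro x i
    have h1 := hBi x i 0
    have h2 := hBi x i 1
    simp only [Fin.sum_univ_two] at h1 h2 ⊢
    linear_combination v x 0 * h1 + v x 1 * h2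

lemma transport [MetricSpace X] [CompactSpace X] (A : unitInterval × X → Fin 2 → Fin 2 → ℂ)
    (hA : Continuous A) (hAi : ∀ y i j, ∑ k, A y i k * A y k j = A y i j)
    (h : ∃ v : X → Fin 2 → ℂ, Continuous v ∧ (∀ x, v x ≠ 0) ∧
      ∀ x i, ∑ j, A (1, x) i j * v x j = v x i) :
    ∃ v : X → Fin 2 → ℂ, Continuous v ∧ (∀ x, v x ≠ 0) ∧
      ∀ x i, ∑ j, A (0, x) i j * v x j = v x i := by
  have huc := CompactSpace.uniformContinuous_of_continuous hA
  obtain ⟨δ, hδ, hδA⟩ := Metric.uniformContinuous_iff.1 huc (1 / 4) (by norm_num)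
  obtain ⟨N, hN⟩ := exists_nat_one_div_lt hδ
  set τ : ℕ → unitInterval := fun k => Set.projIcc 0 1 zero_le_one (1 - (k : ℝ) * (1 / (N + 1))) with hτ
  have hdist : ∀ k, dist (τ k) (τ (k + 1)) < δ := by
    intro k
    refine lt_of_le_of_lt ?_ hN
    rw [Subtype.dist_eq, Real.dist_eq]
    refine (Set.abs_projIcc_sub_projIcc zero_le_one).trans ?_
    have : (0 : ℝ) < 1 / (N + 1) := by positivity
    rw [abs_le]; push_cast
    constructor <;> linarith
  have key : ∀ k, ∃ v : X → Fin 2 → ℂ, Continuous v ∧ (∀ x, v x ≠ 0) ∧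
      ∀ x i, ∑ j, A (τ k, x) i j * v x j = v x i := by
    intro k
    induction k with
    | zero =>
      have : τ 0 = 1 := by
        simp [hτ]
      rw [this]; exact h
    | succ k ih =>
      refine transport_step (fun x => A (τ k, x)) (fun x => A (τ (k + 1), x)) (by fun_prop)
        (fun x => hAi _) ?_ ih
      intro x i j
      have h1 := hδA (a := (τ k, x)) (b := (τ (k + 1), x)) (by
        rw [Prod.dist_eq]; simpa using hdist k)
      have h2 := (dist_le_pi_dist _ _ j).trans ((dist_le_pi_dist _ _ i).trans h1.le)
      rwa [dist_eq_norm] at h2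
  have hz : τ (N + 1) = 0 := by
    have : (1 : ℝ) - ((N + 1 : ℕ) : ℝ) * (1 / (N + 1)) = 0 := by
      push_cast; field_simp; ring
    simp only [hτ]
    rw [this]
    exact Set.projIcc_left zero_le_one
  have := key (N + 1)
  rwa [hz] at this

/-- The bump radius function. -/
noncomputable def bmp (r : ℝ) (z : ℂ) : ℝ := max 0 (r - ‖z‖)

/-- The line spanned in the chart. -/
noncomputable def wv (r : ℝ) (z : ℂ) : Fin 2 → ℂ := ![z, (bmp r z : ℂ)]

noncomputable def dn (r : ℝ) (z : ℂ) : ℝ := ‖z‖ ^ 2 + bmp r z ^ 2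

/-- The projection onto that line. -/
noncomputable def Qz (r : ℝ) (z : ℂ) (i j : Fin 2) : ℂ :=
  wv r z i * (starRingEnd ℂ) (wv r z j) / (dn r z : ℂ)

noncomputable def E11 (i j : Fin 2) : ℂ := if i = 0 ∧ j = 0 then 1 else 0

lemma bmp_cont (r : ℝ) : Continuous (bmp r) := by unfold bmp; fun_prop

lemma dn_pos {r : ℝ} (hr : 0 < r) (z : ℂ) : 0 < dn r z := by
  unfold dn
  by_cases hz : z = 0
  · subst hz
    have : bmp r 0 = r := by simp [bmp, hr.le]
    rw [this]; positivity
  · have : 0 < ‖z‖ := norm_pos_iff.2 hz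
    positivity

lemma wv_cont (r : ℝ) (i : Fin 2) : Continuous (fun z => wv r z i) := by
  have := bmp_cont r
  fin_cases i
  · exact continuous_id
  · exact Complex.continuous_ofReal.comp this

lemma dn_cont (r : ℝ) : Continuous (dn r) := by
  have := bmp_cont r
  unfold dn; fun_prop

lemma wv_sum (r : ℝ) (z : ℂ) : ∑ k, wv r z k * (starRingEnd ℂ) (wv r z k) = (dn r z : ℂ) := by
  simp only [Fin.sum_univ_two, Complex.mul_conj, Complex.normSq_eq_norm_sq]
  simp [wv, dn]

lemma Qz_cont {r : ℝ} (hr : 0 < r) : Continuous (Qz r) := by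
  refine continuous_pi fun i => continuous_pi fun j => ?_
  unfold Qz
  have h1 := wv_cont r i
  have h2 := wv_cont r j
  have h3 := dn_cont r
  refine (h1.mul (Complex.continuous_conj.comp h2)).div (Complex.continuous_ofReal.comp h3) ?_
  intro z
  exact_mod_cast (dn_pos hr z).ne'

lemma Qz_idem {r : ℝ} (hr : 0 < r) (z : ℂ) (i j : Fin 2) :
    ∑ k, Qz r z i k * Qz r z k j = Qz r z i j := by
  have hd : (dn r z : ℂ) ≠ 0 := by exact_mod_cast (dn_pos hr z).ne'
  have h := wv_sum r z
  unfold Qz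
  simp only [Fin.sum_univ_two] at h ⊢
  field_simp
  linear_combination wv r z i * (starRingEnd ℂ) (wv r z j) * h

lemma Qz_trace {r : ℝ} (hr : 0 < r) (z : ℂ) : ∑ k, Qz r z k k = 1 := by
  have hd : (dn r z : ℂ) ≠ 0 := by exact_mod_cast (dn_pos hr z).ne'
  unfold Qz
  rw [← Finset.sum_div, wv_sum, div_self hd]

lemma Qz_far {r : ℝ} (hr : 0 < r) (z : ℂ) (hz : r ≤ ‖z‖) : Qz r z = E11 := by
  have hb : bmp r z = 0 := by simp [bmp, hz]
  have hz0 : z ≠ 0 := by rintro rfl; simp at hz; linarith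
  have hd : (dn r z : ℂ) ≠ 0 := by exact_mod_cast (dn_pos hr z).ne'
  have h := wv_sum r z
  have hw : wv r z = ![z, 0] := by simp [wv, hb]
  funext i j
  unfold Qz
  rw [← h] at hd ⊢
  rw [hw] at hd ⊢
  simp only [Fin.sum_univ_two] at hd ⊢
  fin_cases i <;> fin_cases j <;> simp [E11, hz0]

/-- No nonvanishing section of the nontrivial line bundle. -/
lemma no_section [TopologicalSpace X] [T2Space X] [CompactSpace X]
    (hch : ∀ x : X, ∃ ι : ℂ → X, IsOpenEmbedding ι ∧ ι 0 = x)
    {ι : ℂ → X} (hι : IsOpenEmbedding ι) {r : ℝ} (hr : 0 < r)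
    (v : X → Fin 2 → ℂ) (hv : Continuous v) (hv0 : ∀ x, v x ≠ 0)
    (hQ : ∀ x i, ∑ j, Function.extend ι (Qz r) (fun _ => E11) x i j * v x j = v x i) : False := by
  have hvc : ∀ i, Continuous fun x => v x i := fun i => (continuous_apply i).comp hv
  set lam : ℂ → ℂ := fun z => (∑ j, (starRingEnd ℂ) (wv r z j) * v (ι z) j) / (dn r z : ℂ) with hlam
  have hlc : Continuous lam := by
    refine Continuous.div ?_ (Complex.continuous_ofReal.comp (dn_cont r)) ?_
    · exact continuous_finsetSum _ fun j _ =>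
        (Complex.continuous_conj.comp (wv_cont r j)).mul ((hvc j).comp hι.continuous)
    · intro z
      exact_mod_cast (dn_pos hr z).ne'
  have hvl : ∀ z i, v (ι z) i = wv r z i * lam z := by
    intro z i
    have h := hQ (ι z) i
    rw [hι.injective.extend_apply] at h
    rw [← h, hlam]
    simp only [Qz, Fin.sum_univ_two]
    ring
  have hl0 : ∀ z, lam z ≠ 0 := by
    intro z hz
    apply hv0 (ι z)
    funext i
    rw [hvl, hz, mul_zero]; rfl
  have hf0 : ∀ z, v (ι z) 0 = z * lam z := fun z => by rw [hvl]; simp [wv]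
  have hzero : {x | v x 0 = 0} = {ι 0} := by
    ext x
    simp only [Set.mem_ofPred_eq, Set.mem_singleton_iff]
    constructor
    · intro hx
      by_cases hxr : x ∈ Set.range ι
      · obtain ⟨z, rfl⟩ := hxr
        rw [hf0] at hx
        rcases mul_eq_zero.1 hx with h | h
        · rw [h]
        · exact absurd h (hl0 z)
      · exfalso
        apply hv0 x
        have h := hQ x 1
        rw [Function.extend_apply' _ _ _ (by simpa using hxr)] at h
        simp [E11] at h
        funext i
        fin_cases i
        · exact hx
        · exact h.symm
    · rintro rfl
      rw [hf0, zero_mul]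
  have hodd : ¬ EvenAt (fun x => v x 0) (ι 0) := by
    rw [evenAt_comp_iff hι]
    intro h
    have h2 : EvenAt (fun z => (lam z)⁻¹) 0 :=
      evenAt_of_ne_zero ⟨Set.univ, Filter.univ_mem, (hlc.inv₀ hl0).continuousOn⟩ (inv_ne_zero (hl0 0))
    have h3 := h.mul h2
    apply not_evenAt_sub 0
    refine h3.congr ⟨Set.univ, Filter.univ_mem, fun z _ _ => ?_⟩
    simp only [hf0, sub_zero]
    field_simp [hl0 z]
  refine no_odd hch (hvc 0) (by rw [hzero]; exact Set.finite_singleton _) ?_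
  have : {x | ¬ EvenAt (fun x => v x 0) x} = {ι 0} := by
    apply Set.Subset.antisymm
    · rw [← hzero]; exact oddSet_subset (hvc 0)
    · intro x hx
      rw [Set.mem_singleton_iff] at hx
      subst hx
      exact hodd
  rw [this]; simp

/-- if `X` is moreover a nonempty compact connected topological 2-manifold
without boundary, `m ≥ 1` and `4π < ρ < min (8π) (4π(2+α_1))`, then `Σ_{ρ,α}` with the
weak topology is not contractible. -/
theorem barycenters_surface_not_contractible
    [MetricSpace X] [CompactSpace X] [Infinite X] [MeasurableSpace X] [BorelSpace X]
    [Nonempty X] [ConnectedSpace X]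
    (hman : ∀ x : X, ∃ U : Set X, IsOpen U ∧ x ∈ U ∧ Nonempty (U ≃ₜ (ℝ × ℝ)))
    {m : ℕ} (hm : 1 ≤ m) (p : Fin m → X) (hp : Function.Injective p)
    (α : Fin m → ℝ) (hα : ∀ j, -1 < α j ∧ α j < 0) (hmono : Monotone α)
    (ρ : ℝ) (hρlo : 4 * Real.pi < ρ)
    (hρhi : ρ < min (8 * Real.pi) (4 * Real.pi * (2 + α ⟨0, hm⟩))) :
    ¬ ContractibleSpace ↥(Bar p α ρ) := by
  intro hcon
  have hch := exists_chart hman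
  obtain ⟨x0, hx0⟩ : ∃ x0, x0 ∉ Set.range p := (Set.finite_range p).exists_notMem
  obtain ⟨ι, hι, hι0⟩ := hch x0
  obtain ⟨r, hr, hrp⟩ : ∃ r > 0, ∀ z, ‖z‖ < r → ι z ∉ Set.range p := by
    have hcl : IsClosed (Set.range p) := (Set.finite_range p).isClosed
    have : ι ⁻¹' (Set.range p)ᶜ ∈ 𝓝 (0 : ℂ) :=
      hι.continuous.continuousAt (hcl.isOpen_compl.mem_nhds (by rw [hι0]; exact hx0))
    obtain ⟨r, hr, h⟩ := Metric.mem_nhds_iff.1 this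
    exact ⟨r, hr, fun z hz => h (by simpa using hz)⟩
  set Q : X → Fin 2 → Fin 2 → ℂ := Function.extend ι (Qz r) (fun _ => E11) with hQdef
  have hQι : ∀ z, Q (ι z) = Qz r z := fun z => hι.injective.extend_apply _ _ z
  have hQo : ∀ x, x ∉ Set.range ι → Q x = E11 := fun x hx =>
    Function.extend_apply' _ _ _ (by simpa using hx)
  have hQc : Continuous Q := (glue_continuous hι continuous_const (Qz_cont hr)
    (R := r) (fun z hz => Qz_far hr z hz.le)).1
  have hQij : ∀ i j, Continuous fun x => Q x i j := fun i j =>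
      (continuous_apply j).comp ((continuous_apply i).comp hQc)
  have hQi : ∀ x i j, ∑ k, Q x i k * Q x k j = Q x i j := by
    intro x i j
    by_cases hx : x ∈ Set.range ι
    · obtain ⟨z, rfl⟩ := hx
      rw [hQι]; exact Qz_idem hr z i j
    · rw [hQo x hx]
      fin_cases i <;> fin_cases j <;> simp [E11]
  have hQt : ∀ x, ∑ k, Q x k k = 1 := by
    intro x
    by_cases hx : x ∈ Set.range ι
    · obtain ⟨z, rfl⟩ := hx
      rw [hQι]; exact Qz_trace hr z
    · rw [hQo x hx]; simp [E11]
  have hQp : ∀ j, Q (p j) = E11 := by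
    intro j
    by_cases hx : p j ∈ Set.range ι
    · obtain ⟨z, hz⟩ := hx
      rw [← hz, hQι]
      apply Qz_far hr
      by_contra hlt
      exact hrp z (not_le.1 hlt) (by rw [hz]; exact ⟨j, rfl⟩)
    · exact hQo _ hx
  set P : Bar p α ρ → Fin 2 → Fin 2 → ℂ :=
    fun μ i j => ∫ x, Q x i j ∂((μ : ProbabilityMeasure X) : Measure X) with hP
  have hPc : Continuous P := continuous_pi fun i => continuous_pi fun j =>
    (continuous_int _ (hQij i j)).comp continuous_subtype_val
  have hPQ : ∀ μ, ∃ q, P μ = Q q := by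
    intro μ
    obtain ⟨q, hq⟩ := bar_int hm p hp α hα hmono ρ hρhi μ.1 μ.2
    refine ⟨q, ?_⟩
    funext i j
    exact hq _ (hQij i j) (fun k => by rw [hQp, hQp])
  set D : X → Bar p α ρ := fun x => ⟨diracProba x, dirac_mem_bar hm p hp α hα hmono ρ hρlo x⟩ with hD
  have hDc : Continuous D := continuous_diracProba.subtype_mk _
  have hPD : ∀ x, P (D x) = Q x := by
    intro x
    funext i j
    simp [hP, hD, diracProba]
  obtain ⟨y0, ⟨H⟩⟩ := id_nullhomotopic (Bar p α ρ)
  set A : unitInterval × X → Fin 2 → Fin 2 → ℂ := fun y => P (H (y.1, D y.2)) with hA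
  have hAc : Continuous A := hPc.comp (H.continuous.comp
    (continuous_fst.prodMk (hDc.comp continuous_snd)))
  have hAi : ∀ y i j, ∑ k, A y i k * A y k j = A y i j := by
    intro y
    obtain ⟨q, hq⟩ := hPQ (H (y.1, D y.2))
    simp only [hA, hq]
    exact hQi q
  have hA0 : ∀ x, A (0, x) = Q x := by
    intro x
    simp only [hA, H.apply_zero]
    exact hPD x
  have hA1 : ∀ x, A (1, x) = P y0 := by
    intro x
    simp only [hA, H.apply_one]
    rfl
  have hsec := transport A hAc hAi (by
    obtain ⟨q, hq⟩ := hPQ y0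
    obtain ⟨k, hk⟩ : ∃ k, Q q k k ≠ 0 := by
      by_contra hcon
      push Not at hcon
      have := hQt q
      simp [hcon] at this
    refine ⟨fun _ i => Q q i k, continuous_const, fun x h => hk (congrFun h k), fun x i => ?_⟩
    rw [hA1, hq]
    exact hQi q i k)
  obtain ⟨v, hv, hv0, hvQ⟩ := hsec
  exact no_section hch hι hr v hv hv0 (fun x i => by
    have := hvQ x i
    rwa [hA0] at this)
end
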